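/- arXiv:2301.02155 — 2 statements merged into one kernel-verified Lean document; each statement's English description precedes it below -/
import Mathlib

section
/- If an (L, α1, α2, β1, β2) zero-error (2,2) PIR code exists, then a (2L, α1+α2, α1+α2, β1+β2, β1+β2) zero-error (2,2) PIR code exists. -/
/-!
Exchanging the two databases of a code swaps `(α₁, β₁)` with `(α₂, β₂)`. Running two codes side by
side, on disjoint parts of the messages and with independent queries, adds the message lengths,
storage sizes and answer lengths; it stays private because the law of the query seen by a database
is the product of the laws of the queries it sees in the two codes. Running a code side by side
with its own exchange makes the parameters of the two databases agree.
-/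

open scoped BigOperators

namespace PIR

/-- Messages are length-`L` vectors over `F_2`. -/
abbrev Msg (L : ℕ) := Fin L → ZMod 2

/-- A (2,2) PIR code (without the correctness condition) with message length `L`
and query alphabet `Q`.  The two messages are independent and uniform on `F_2^L`;
the queries are independent of the messages (built into the model: the query
distribution `P k` for desired message `k` does not depend on the messages). -/
structure CodeBase (L : ℕ) (Q : Type) [Fintype Q] [DecidableEq Q] where
  /-- query distribution for desired message index `k` -/
  P : Fin 2 → Q × Q → ℝ
  P_nonneg : ∀ k qq, 0 ≤ P k qq
  P_sum : ∀ k, ∑ qq : Q × Q, P k qq = 1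
  /-- number of stored `F_2` symbols at database `n` -/
  stor : Fin 2 → ℕ
  /-- storage encoders -/
  phi : (n : Fin 2) → Msg L × Msg L → (Fin (stor n) → ZMod 2)
  /-- answer lengths -/
  blen : Fin 2 → Q → ℕ
  /-- deterministic answer functions -/
  ans : (n : Fin 2) → (q : Q) → (Fin (stor n) → ZMod 2) → (Fin (blen n q) → ZMod 2)
  /-- decoding functions -/
  dec : (k : Fin 2) → (q₁ q₂ : Q) → (Fin (blen 0 q₁) → ZMod 2) →
      (Fin (blen 1 q₂) → ZMod 2) → Msg L
  /-- Privacy: for each database `n`, the joint distribution of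
  `(Q_n^{[k]}, A_n^{[k]}, S_n)` is the same for `k = 1, 2`.  Since the answer
  `A_n` is the fixed deterministic function `ans` of `(Q_n, S_n)` (not
  depending on `k`), this is expressed as equality of the joint distributions of
  `(Q_n, S_n)` (messages uniform, queries independent of messages). -/
  privacy : ∀ (n : Fin 2) (q : Q) (s : Fin (stor n) → ZMod 2),
    (∑ qq : Q × Q, if (if n = 0 then qq.1 else qq.2) = q then P 0 qq else 0) *
      ((Finset.univ.filter (fun w : Msg L × Msg L => phi n w = s)).card : ℝ) =
    (∑ qq : Q × Q, if (if n = 0 then qq.1 else qq.2) = q then P 1 qq else 0) *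
      ((Finset.univ.filter (fun w : Msg L × Msg L => phi n w = s)).card : ℝ)

variable {L : ℕ} {Q : Type} [Fintype Q] [DecidableEq Q]

/-- The desired message `W_k`. -/
def target (k : Fin 2) (w : Msg L × Msg L) : Msg L := if k = 0 then w.1 else w.2

/-- The decoder output `Ŵ_k` when the realized queries are `qq` and the messages `w`. -/
def retrieved (C : CodeBase L Q) (k : Fin 2) (qq : Q × Q) (w : Msg L × Msg L) : Msg L :=
  C.dec k qq.1 qq.2 (C.ans 0 qq.1 (C.phi 0 w)) (C.ans 1 qq.2 (C.phi 1 w))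

/-- Zero-error correctness: `Ŵ_k = W_k` for all realizations. -/
def IsZeroError (C : CodeBase L Q) : Prop :=
  ∀ (k : Fin 2) (w : Msg L × Msg L) (qq : Q × Q), C.P k qq ≠ 0 →
    retrieved C k qq w = target k w

/-- The average probability of error `P_e`. -/
noncomputable def Pe (C : CodeBase L Q) : ℝ :=
  (1/2) * ∑ k : Fin 2, ∑ w : Msg L × Msg L, ∑ qq : Q × Q,
    ((2:ℝ)^(2*L))⁻¹ * C.P k qq * (if retrieved C k qq w ≠ target k w then 1 else 0)

/-- The retrieval rate `β_n = E[β_n^{(Q_n)}]` (the marginal of `Q_n` is the same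
for `k=1,2` by privacy; we use `k=1`, i.e. index `0`). -/
noncomputable def betaRate (C : CodeBase L Q) (n : Fin 2) : ℝ :=
  ∑ qq : Q × Q, C.P 0 qq * (C.blen n (if n = 0 then qq.1 else qq.2) : ℝ)

/-- A linear PIR code: storage encoders and answer functions are `F_2`-linear. -/
def IsLinear (C : CodeBase L Q) : Prop :=
  (∀ n : Fin 2, IsLinearMap (ZMod 2) (C.phi n)) ∧
  (∀ (n : Fin 2) (q : Q), IsLinearMap (ZMod 2) (C.ans n q))

/-- A bundled PIR code (with its query alphabet). -/
structure Code (L : ℕ) where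
  Q : Type
  [fQ : Fintype Q]
  [dQ : DecidableEq Q]
  base : CodeBase L Q

attribute [instance] Code.fQ Code.dQ

/-- A normalized storage-retrieval pair `(ᾱ, β̄)` is achievable. -/
def Achievable (ab : ℝ × ℝ) : Prop :=
  ∀ ε > (0:ℝ), ∃ L₀ : ℕ, ∀ L ≥ L₀, ∃ C : Code L,
    IsZeroError C.base ∧
    ((C.base.stor 0 + C.base.stor 1 : ℕ) : ℝ) / 2 ≤ L * (ab.1 + ε) ∧
    (betaRate C.base 0 + betaRate C.base 1) / 2 ≤ L * (ab.2 + ε)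

/-- Achievability by linear codes. -/
def LinAchievable (ab : ℝ × ℝ) : Prop :=
  ∀ ε > (0:ℝ), ∃ L₀ : ℕ, ∀ L ≥ L₀, ∃ C : Code L,
    IsZeroError C.base ∧ IsLinear C.base ∧
    ((C.base.stor 0 + C.base.stor 1 : ℕ) : ℝ) / 2 ≤ L * (ab.1 + ε) ∧
    (betaRate C.base 0 + betaRate C.base 1) / 2 ≤ L * (ab.2 + ε)

/-- The achievable storage-retrieval rate region `R`. -/
def Region : Set (ℝ × ℝ) := { ab | Achievable ab }

/-- The query distribution used for the `(2,2)` PIR system: for message 1,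
uniform on `{(1,1),(2,2)}`; for message 2, uniform on `{(1,2),(2,1)}`. -/
noncomputable def stdP : Fin 2 → Fin 2 × Fin 2 → ℝ :=
  fun k qq => if (k = 0 ∧ qq.1 = qq.2) ∨ (k = 1 ∧ qq.1 ≠ qq.2) then 1/2 else 0


section Query

variable {α β R : Type*}

/-- The component at database `n` of a pair of queries, written as in `CodeBase.privacy` and
`betaRate`, so that both unfold to it definitionally. -/
def query (n : Fin 2) (qq : α × α) : α := if n = 0 then qq.1 else qq.2

theorem query_swap (n : Fin 2) (qq : α × α) : query n qq.swap = query n.rev qq := by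
  fin_cases n <;> rfl

theorem query_mk_prod (n : Fin 2) (u : α × α) (v : β × β) :
    query n ((u.1, v.1), (u.2, v.2)) = (query n u, query n v) := by
  fin_cases n <;> rfl

/-- The product of weights on pairs of `α`-queries and on pairs of `β`-queries, as a weight on
pairs of `α × β`-queries: the queries are grouped by database rather than by factor. -/
def queryProd [Mul R] (p : α × α → R) (p' : β × β → R) (x : (α × β) × (α × β)) : R :=
  p (x.1.1, x.2.1) * p' (x.1.2, x.2.2)

variable [Fintype α] [Fintype β]

theorem sum_prod_prod_eq_sum_sum [AddCommMonoid R] (f : (α × β) × (α × β) → R) :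
    ∑ x, f x = ∑ u : α × α, ∑ v : β × β, f ((u.1, v.1), (u.2, v.2)) := by
  rw [← Fintype.sum_prod_type', ← (Equiv.prodProdProdComm α α β β).sum_comp]
  rfl

theorem sum_queryProd [NonUnitalNonAssocSemiring R] (p : α × α → R) (p' : β × β → R) :
    ∑ x, queryProd p p' x = (∑ u, p u) * ∑ v, p' v := by
  rw [sum_prod_prod_eq_sum_sum, Finset.sum_mul_sum]
  rfl

theorem sum_queryProd_mul_query_add [CommSemiring R] {p : α × α → R} {p' : β × β → R}
    (hp : ∑ u, p u = 1) (hp' : ∑ v, p' v = 1) (n : Fin 2) (f : α → R) (g : β → R) :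
    ∑ x, queryProd p p' x * (f (query n x).1 + g (query n x).2) =
      ∑ u, p u * f (query n u) + ∑ v, p' v * g (query n v) := by
  calc ∑ x, queryProd p p' x * (f (query n x).1 + g (query n x).2)
      = ∑ u, ∑ v, (p u * f (query n u) * p' v + p u * (p' v * g (query n v))) := by
        rw [sum_prod_prod_eq_sum_sum]
        refine Finset.sum_congr rfl fun u _ ↦ Finset.sum_congr rfl fun v _ ↦ ?_
        rw [query_mk_prod, queryProd]
        ring
    _ = (∑ u, p u * f (query n u)) * ∑ v, p' v + (∑ u, p u) * ∑ v, p' v * g (query n v) := by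
        simp only [Finset.sum_add_distrib, Finset.sum_mul_sum]
    _ = ∑ u, p u * f (query n u) + ∑ v, p' v * g (query n v) := by
        rw [hp, hp', mul_one, one_mul]

variable [DecidableEq α] [DecidableEq β]

/-- The marginal at database `n` of a weight `p` on pairs of queries. -/
def queryMarginal [AddCommMonoid R] (p : α × α → R) (n : Fin 2) (q : α) : R :=
  ∑ qq : α × α, if query n qq = q then p qq else 0

theorem queryMarginal_comp_swap [AddCommMonoid R] (p : α × α → R) (n : Fin 2) (q : α) :
    queryMarginal (p ∘ Prod.swap) n q = queryMarginal p n.rev q := by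
  rw [queryMarginal, ← (Equiv.prodComm α α).sum_comp]
  simp only [Equiv.prodComm_apply, query_swap, Function.comp_apply, Prod.swap_swap, queryMarginal]

theorem queryMarginal_queryProd [NonUnitalNonAssocSemiring R]
    (p : α × α → R) (p' : β × β → R) (n : Fin 2) (q : α × β) :
    queryMarginal (queryProd p p') n q = queryMarginal p n q.1 * queryMarginal p' n q.2 := by
  rw [queryMarginal, sum_prod_prod_eq_sum_sum, queryMarginal, queryMarginal, Finset.sum_mul_sum]
  simp only [query_mk_prod, queryProd, Prod.ext_iff, ite_zero_mul_ite_zero]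

end Query

section Blocks

variable {α : Type*} {m n : ℕ}

/-- The first `m` entries of a vector of length `m + n`. -/
def fstBlock (v : Fin (m + n) → α) : Fin m → α := fun i ↦ v (Fin.castAdd n i)

/-- The last `n` entries of a vector of length `m + n`. -/
def sndBlock (v : Fin (m + n) → α) : Fin n → α := fun i ↦ v (Fin.natAdd m i)

theorem fstBlock_append (u : Fin m → α) (v : Fin n → α) : fstBlock (Fin.append u v) = u :=
  funext (Fin.append_left u v)

theorem sndBlock_append (u : Fin m → α) (v : Fin n → α) : sndBlock (Fin.append u v) = v :=
  funext (Fin.append_right u v)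

theorem append_fstBlock_sndBlock (v : Fin (m + n) → α) :
    Fin.append (fstBlock v) (sndBlock v) = v :=
  Fin.append_castAdd_natAdd

end Blocks

variable {L' : ℕ} {Q' : Type} [Fintype Q'] [DecidableEq Q']

theorem target_map (g : Msg L → Msg L') (k : Fin 2) (w : Msg L × Msg L) :
    target k (w.map g g) = g (target k w) :=
  (apply_ite g _ _ _).symm

namespace CodeBase

theorem queryMarginal_P_zero_eq_P_one (C : CodeBase L Q) (n : Fin 2) (q : Q) :
    queryMarginal (C.P 0) n q = queryMarginal (C.P 1) n q := by
  have stored_ne : ((Finset.univ.filter fun w ↦ C.phi n w = C.phi n 0).card : ℝ) ≠ 0 :=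
    Nat.cast_ne_zero.2 (Finset.card_ne_zero_of_mem (Finset.mem_filter_univ 0 |>.2 rfl))
  exact mul_right_cancel₀ stored_ne (C.privacy n q (C.phi n 0))

/-- The code obtained from `C` by exchanging its two databases; `n.rev` is the database
other than `n`. -/
def swap (C : CodeBase L Q) : CodeBase L Q where
  P k := C.P k ∘ Prod.swap
  P_nonneg k qq := C.P_nonneg k qq.swap
  P_sum k := ((Equiv.prodComm Q Q).sum_comp (C.P k)).trans (C.P_sum k)
  stor n := C.stor n.rev
  phi n := C.phi n.rev
  blen n := C.blen n.rev
  ans n := C.ans n.rev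
  dec k q₁ q₂ a₁ a₂ := C.dec k q₂ q₁ a₂ a₁
  privacy n q _ := by
    have marginal_eq : queryMarginal (C.P 0 ∘ Prod.swap) n q =
        queryMarginal (C.P 1 ∘ Prod.swap) n q := by
      simp only [queryMarginal_comp_swap, C.queryMarginal_P_zero_eq_P_one]
    exact congrArg (· * _) marginal_eq

theorem betaRate_swap (C : CodeBase L Q) (n : Fin 2) : betaRate C.swap n = betaRate C n.rev := by
  change ∑ qq, C.P 0 qq.swap * (C.blen n.rev (query n qq) : ℝ) =
    ∑ qq, C.P 0 qq * (C.blen n.rev (query n.rev qq) : ℝ)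
  rw [← (Equiv.prodComm Q Q).sum_comp]
  simp only [Equiv.prodComm_apply, query_swap, Prod.swap_swap]

/-- Two codes run side by side with independent queries: `C` on the first `L` symbols of each
message and `D` on the last `L'`, each database storing and answering the concatenation of what it
stores and answers in the two codes. -/
def directSum (C : CodeBase L Q) (D : CodeBase L' Q') : CodeBase (L + L') (Q × Q') where
  P k := queryProd (C.P k) (D.P k)
  P_nonneg k _ := mul_nonneg (C.P_nonneg k _) (D.P_nonneg k _)
  P_sum k := by rw [sum_queryProd, C.P_sum, D.P_sum, one_mul]
  stor n := C.stor n + D.stor n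
  phi n w := Fin.append (C.phi n (w.map fstBlock fstBlock)) (D.phi n (w.map sndBlock sndBlock))
  blen n q := C.blen n q.1 + D.blen n q.2
  ans n q s := Fin.append (C.ans n q.1 (fstBlock s)) (D.ans n q.2 (sndBlock s))
  dec k q₁ q₂ a₁ a₂ := Fin.append (C.dec k q₁.1 q₂.1 (fstBlock a₁) (fstBlock a₂))
    (D.dec k q₁.2 q₂.2 (sndBlock a₁) (sndBlock a₂))
  privacy n q _ := by
    have marginal_eq : queryMarginal (queryProd (C.P 0) (D.P 0)) n q =
        queryMarginal (queryProd (C.P 1) (D.P 1)) n q := by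
      simp only [queryMarginal_queryProd, C.queryMarginal_P_zero_eq_P_one,
        D.queryMarginal_P_zero_eq_P_one]
    exact congrArg (· * _) marginal_eq

theorem retrieved_directSum (C : CodeBase L Q) (D : CodeBase L' Q') (k : Fin 2)
    (x : (Q × Q') × (Q × Q')) (w : Msg (L + L') × Msg (L + L')) :
    retrieved (C.directSum D) k x w =
      Fin.append (retrieved C k (x.1.1, x.2.1) (w.map fstBlock fstBlock))
        (retrieved D k (x.1.2, x.2.2) (w.map sndBlock sndBlock)) := by
  simp only [retrieved, directSum, fstBlock_append, sndBlock_append]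

theorem betaRate_directSum (C : CodeBase L Q) (D : CodeBase L' Q') (n : Fin 2) :
    betaRate (C.directSum D) n = betaRate C n + betaRate D n := by
  have additive := sum_queryProd_mul_query_add (C.P_sum 0) (D.P_sum 0) n
    (fun q ↦ (C.blen n q : ℝ)) (fun q ↦ (D.blen n q : ℝ))
  simp only [← Nat.cast_add] at additive
  exact additive

end CodeBase

theorem IsZeroError.swap {C : CodeBase L Q} (hC : IsZeroError C) : IsZeroError C.swap :=
  fun k w qq hqq ↦ hC k w qq.swap hqq

theorem IsZeroError.directSum {C : CodeBase L Q} {D : CodeBase L' Q'}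
    (hC : IsZeroError C) (hD : IsZeroError D) : IsZeroError (C.directSum D) := by
  intro k w x hx
  rw [CodeBase.retrieved_directSum, hC k _ _ (left_ne_zero_of_mul hx),
    hD k _ _ (right_ne_zero_of_mul hx), target_map, target_map, append_fstBlock_sndBlock]

/-- If an `(L, α1, α2, β1, β2)` zero-error (2,2) PIR code exists, then a
`(2L, α1+α2, α1+α2, β1+β2, β1+β2)` zero-error (2,2) PIR code exists. -/
theorem statement0 {L : ℕ} (C : Code L) (hC : IsZeroError C.base) :
    ∃ C' : Code (2 * L),
      IsZeroError C'.base ∧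
      C'.base.stor 0 = C.base.stor 0 + C.base.stor 1 ∧
      C'.base.stor 1 = C.base.stor 0 + C.base.stor 1 ∧
      betaRate C'.base 0 = betaRate C.base 0 + betaRate C.base 1 ∧
      betaRate C'.base 1 = betaRate C.base 0 + betaRate C.base 1 := by
  rw [two_mul]
  refine ⟨⟨C.Q × C.Q, C.base.directSum C.base.swap⟩,
    hC.directSum hC.swap, rfl, add_comm _ _, ?_, ?_⟩
  · rw [CodeBase.betaRate_directSum, CodeBase.betaRate_swap]
    rfl
  · rw [CodeBase.betaRate_directSum, CodeBase.betaRate_swap, add_comm]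
    rfl

end PIR
end

section
/- For every integer t ≥ 1, the region R^{(t)}_in is contained in the achievable storage-retrieval rate region R of the (2,2) PIR problem. -/
/-!
Cutting the messages into blocks of `t` bits turns them into a sequence of `n` letters from `F_2^t ×
F_2^t`. Such a sequence is described by five codewords, one from a random codebook for each of `X₀`,
`X₁`, `X₂`, `Y₁`, `Y₂`, whose joint type with a random translate of the sequence is close to the
given distribution; the translation makes up for the arbitrary type of the sequence itself. The
covering conditions of multiple description coding bound the second moment of the number of such
codewords, so that some exist with probability at least `2^{-o(n)}`; the packing conditions bound
the probability that a codeword is not determined by the bins of the indices that a decoder sees.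
Hence `2^{o(n)}` independent pairs of codebooks and translations contain, for every message
sequence, a pair which describes it and can be decoded without error.

The databases store the choice of this pair, at no cost in rate, together with the bins of the
indices at the rates `α`: those of `X₀, X₁, X₂` at the first database and of `Y₁, Y₂` at the second.
On a query for `X₀` and one of `X₁`, `X₂`, or for one of `Y₁`, `Y₂`, they answer with the bins at
the rates `β`. Each query is uniform whichever message is desired, and only the pairing of the two
queries depends on it.
-/

open scoped BigOperators

namespace PIR

variable {L : ℕ} {Q : Type} [Fintype Q] [DecidableEq Q]

/-- Probability that a random variable `X` (on finite sample space `Ω` with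
probability mass function `p`) takes the value `x`. -/
noncomputable def prOf {Ω : Type} [Fintype Ω] {γ : Type} [DecidableEq γ]
    (p : Ω → ℝ) (X : Ω → γ) (x : γ) : ℝ :=
  ∑ ω : Ω, if X ω = x then p ω else 0

/-- Shannon entropy (in bits) of the random variable `X`. -/
noncomputable def ent {Ω : Type} [Fintype Ω] {γ : Type} [Fintype γ] [DecidableEq γ]
    (p : Ω → ℝ) (X : Ω → γ) : ℝ :=
  ∑ x : γ, -(prOf p X x * Real.logb 2 (prOf p X x))

/-- Conditional entropy `H(X|Y) = H(X,Y) - H(Y)` (in bits). -/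
noncomputable def condEnt {Ω : Type} [Fintype Ω] {γ δ : Type} [Fintype γ] [DecidableEq γ]
    [Fintype δ] [DecidableEq δ] (p : Ω → ℝ) (X : Ω → γ) (Y : Ω → δ) : ℝ :=
  ent p (fun ω => (X ω, Y ω)) - ent p Y

/-- Mutual information `I(X;Y)` (in bits). -/
noncomputable def mi {Ω : Type} [Fintype Ω] {γ δ : Type} [Fintype γ] [DecidableEq γ]
    [Fintype δ] [DecidableEq δ] (p : Ω → ℝ) (X : Ω → γ) (Y : Ω → δ) : ℝ :=
  ent p X + ent p Y - ent p (fun ω => (X ω, Y ω))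

/-- Conditional mutual information `I(X;Y|Z)` (in bits). -/
noncomputable def cmi {Ω : Type} [Fintype Ω] {γ δ ε : Type} [Fintype γ] [DecidableEq γ]
    [Fintype δ] [DecidableEq δ] [Fintype ε] [DecidableEq ε]
    (p : Ω → ℝ) (X : Ω → γ) (Y : Ω → δ) (Z : Ω → ε) : ℝ :=
  ent p (fun ω => (X ω, Z ω)) + ent p (fun ω => (Y ω, Z ω))
    - ent p (fun ω => (X ω, Y ω, Z ω)) - ent p Z

/-- Joint entropy `H({U_i, i ∈ A})` of the subfamily indexed by `A`. -/
noncomputable def jEnt {Ω : Type} [Fintype Ω] {γ : Type} [Fintype γ] [DecidableEq γ]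
    {M : ℕ} (p : Ω → ℝ) (U : Fin M → Ω → γ) (A : Finset (Fin M)) : ℝ :=
  ent p (fun ω => fun i : {i // i ∈ A} => U i.1 ω)

/-- Conditional joint entropy `H({U_j, j ∈ J} | {U_j', j' ∈ B})`. -/
noncomputable def cjEnt {Ω : Type} [Fintype Ω] {γ : Type} [Fintype γ] [DecidableEq γ]
    {M : ℕ} (p : Ω → ℝ) (U : Fin M → Ω → γ) (J B : Finset (Fin M)) : ℝ :=
  jEnt p U (J ∪ B) - jEnt p U B

/-- Conditional joint entropy `H({U_i, i ∈ A} | S)`. -/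
noncomputable def jEntCondS {Ω : Type} [Fintype Ω] {γ τ : Type} [Fintype γ] [DecidableEq γ]
    [Fintype τ] [DecidableEq τ] {M : ℕ}
    (p : Ω → ℝ) (U : Fin M → Ω → γ) (A : Finset (Fin M)) (S : Ω → τ) : ℝ :=
  ent p (fun ω => ((fun i : {i // i ∈ A} => U i.1 ω), S ω)) - ent p S

/-- The binned multiple-description region `R*_MD((S,U_1,…,U_M), ({U_j, j∈A}, A ∈ recs))`:
the rate vectors `(R, R')` with `0 ≤ R_i ≤ R'_i`,
`Σ_{i∈A} R'_i ≥ Σ_{i∈A} H(U_i) − H({U_i,i∈A}|S)` for every `A ⊆ {1,…,M}`, and for every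
reconstruction set `B ∈ recs` and every `J ⊆ B`,
`Σ_{j∈J}(R'_j − R_j) ≤ Σ_{j∈J} H(U_j) − H({U_j,j∈J} | {U_{j'}, j' ∈ B \ J})`. -/
def RstarMD {Ω γ τ : Type} [Fintype Ω] [Fintype γ] [DecidableEq γ] [Fintype τ] [DecidableEq τ]
    {M : ℕ} (p : Ω → ℝ) (S : Ω → τ) (U : Fin M → Ω → γ)
    (recs : Finset (Finset (Fin M))) (R R' : Fin M → ℝ) : Prop :=
  (∀ i, 0 ≤ R i ∧ R i ≤ R' i) ∧
  (∀ A : Finset (Fin M), (∑ i ∈ A, ent p (U i)) - jEntCondS p U A S ≤ ∑ i ∈ A, R' i) ∧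
  (∀ B ∈ recs, ∀ J ⊆ B,
    ∑ j ∈ J, (R' j - R j) ≤ (∑ j ∈ J, ent p (U j)) - cjEnt p U J (B \ J))

/-- Random variables `(X0,X1,X2,Y1,Y2)` (indexed `0,…,4`) jointly distributed with the pair
of messages `(V1,V2)` which is uniform on `F_2^t × F_2^t`. -/
structure RVSetup (t : ℕ) where
  Ω : Type
  [fΩ : Fintype Ω]
  p : Ω → ℝ
  p_nonneg : ∀ ω, 0 ≤ p ω
  p_sum : ∑ ω : Ω, p ω = 1
  γ : Type
  [fγ : Fintype γ]
  [dγ : DecidableEq γ]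
  V : Ω → Msg t × Msg t
  X : Fin 5 → Ω → γ
  V_unif : ∀ v : Msg t × Msg t, prOf p V v = ((2:ℝ)^(2*t))⁻¹

attribute [instance] RVSetup.fΩ RVSetup.fγ RVSetup.dγ

/-- The four reconstruction sets `{X0,X1,Y1},{X0,X1,Y2},{X0,X2,Y1},{X0,X2,Y2}` with the
indexing `0 ↦ X0, 1 ↦ X1, 2 ↦ X2, 3 ↦ Y1, 4 ↦ Y2`. -/
def recs5 : Finset (Finset (Fin 5)) := {{0,1,3}, {0,1,4}, {0,2,3}, {0,2,4}}

/-- The inner-bound region `R^{(t)}_in`. -/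
def RinMem (t : ℕ) (ab : ℝ × ℝ) : Prop :=
  ∃ S : RVSetup t,
    -- (1) decodability of V1 and V2 from the prescribed triples
    (∃ (f11 f12 f21 f22 : S.γ × S.γ × S.γ → Msg t),
      ∀ ω, S.p ω ≠ 0 →
        (S.V ω).1 = f11 (S.X 0 ω, S.X 1 ω, S.X 3 ω) ∧
        (S.V ω).1 = f22 (S.X 0 ω, S.X 2 ω, S.X 4 ω) ∧
        (S.V ω).2 = f12 (S.X 0 ω, S.X 1 ω, S.X 4 ω) ∧
        (S.V ω).2 = f21 (S.X 0 ω, S.X 2 ω, S.X 3 ω)) ∧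
    -- (2),(3),(4): existence of rates
    (∃ β γr : Fin 5 → ℝ,
      RstarMD S.p S.V S.X recs5 β γr ∧
      ∃ α : Fin 5 → ℝ,
        (∀ i, 0 ≤ α i ∧ α i ≤ β i) ∧
        ((γr 0 - β 0) + (γr 1 - β 1) + (γr 2 - β 2) <
            ent S.p (S.X 0) + ent S.p (S.X 1) + ent S.p (S.X 2)
              - jEnt S.p S.X {0,1,2} →
          RstarMD S.p S.V ![S.X 0, S.X 1, S.X 2] {(Finset.univ : Finset (Fin 3))}
            ![α 0, α 1, α 2] ![γr 0, γr 1, γr 2]) ∧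
        (¬ ((γr 0 - β 0) + (γr 1 - β 1) + (γr 2 - β 2) <
            ent S.p (S.X 0) + ent S.p (S.X 1) + ent S.p (S.X 2)
              - jEnt S.p S.X {0,1,2}) →
          α 0 = β 0 ∧ α 1 = β 1 ∧ α 2 = β 2) ∧
        ((γr 3 - β 3) + (γr 4 - β 4) < mi S.p (S.X 3) (S.X 4) →
          RstarMD S.p S.V ![S.X 3, S.X 4] {(Finset.univ : Finset (Fin 2))}
            ![α 3, α 4] ![γr 3, γr 4]) ∧
        (¬ ((γr 3 - β 3) + (γr 4 - β 4) < mi S.p (S.X 3) (S.X 4)) →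
          α 3 = β 3 ∧ α 4 = β 4) ∧
        2 * t * ab.1 ≥ α 0 + α 1 + α 2 + α 3 + α 4 ∧
        4 * t * ab.2 ≥ 2 * β 0 + β 1 + β 2 + β 3 + β 4)

section RandomCodebooks

open Finset
open scoped Classical

lemma card_filter_eqOn_mul_prod {A : Type*} {Z : A → Type*} [Fintype A] [DecidableEq A]
    [∀ a, Fintype (Z a)] (T : Finset A) (x : ∀ a, Z a) :
    #{z : ∀ a, Z a | ∀ a ∈ T, z a = x a} * ∏ a ∈ T, Fintype.card (Z a) =
      Fintype.card (∀ a, Z a) := by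
  have hpi : ({z : ∀ a, Z a | ∀ a ∈ T, z a = x a} : Finset _) =
      Fintype.piFinset fun a => if a ∈ T then {x a} else univ := by
    ext z
    simp only [mem_filter, mem_univ, true_and, Fintype.mem_piFinset]
    refine forall_congr' fun a => ?_
    split_ifs with ha <;> simp [ha]
  rw [hpi, Fintype.card_piFinset, Fintype.card_pi, ← Fintype.prod_ite_mem T, ← prod_mul_distrib]
  refine prod_congr rfl fun a _ => ?_
  split_ifs <;> simp [*]

variable {ι : Type*} [Fintype ι] [DecidableEq ι] {K Y : ι → Type*}
  [∀ i, Fintype (K i)]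

lemma sum_prod_agree_le (m : ∀ i, K i) :
    ∑ m' : ∀ i, K i, ∏ i with m i = m' i, (Fintype.card (K i) : ℝ) ≤
      2 ^ Fintype.card ι * ∏ i, (Fintype.card (K i) : ℝ) := by
  calc ∑ m' : ∀ i, K i, ∏ i with m i = m' i, (Fintype.card (K i) : ℝ)
      = ∑ E : Finset ι, (#{m' : ∀ i, K i | ({i | m i = m' i} : Finset ι) = E} : ℝ) *
          ∏ i ∈ E, (Fintype.card (K i) : ℝ) := by
        rw [← sum_fiberwise univ fun m' : ∀ i, K i => ({i | m i = m' i} : Finset ι)]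
        refine sum_congr rfl fun E _ => ?_
        rw [← nsmul_eq_mul]
        exact sum_eq_card_nsmul fun m' hm' => by rw [(mem_filter.mp hm').2]
    _ ≤ ∑ E : Finset ι, (#{m' : ∀ i, K i | ∀ i ∈ E, m' i = m i} : ℝ) *
          ∏ i ∈ E, (Fintype.card (K i) : ℝ) := by
        gcongr with E _ m' _
        rintro rfl i hi
        simpa [eq_comm] using hi
    _ = 2 ^ Fintype.card ι * ∏ i, (Fintype.card (K i) : ℝ) := by
        have hE : ∀ E : Finset ι, (#{m' : ∀ i, K i | ∀ i ∈ E, m' i = m i} : ℝ) *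
            ∏ i ∈ E, (Fintype.card (K i) : ℝ) = ∏ i, (Fintype.card (K i) : ℝ) := fun E => by
          exact_mod_cast (card_filter_eqOn_mul_prod E m).trans Fintype.card_pi
        simp [hE]

/-- A family of codebooks, one for each description `i`: the codebook of description `i` assigns
a codeword in `Y i` to each index in `K i`. -/
abbrev Codebook {ι : Type*} (K Y : ι → Type*) := ∀ a : Σ i, K i, Y a.1

/-- The codewords of a codebook at the indices `m`. -/
def Codebook.select {ι : Type*} {K Y : ι → Type*} (c : Codebook K Y) (m : ∀ i, K i) (i : ι) :
    Y i :=
  c ⟨i, m i⟩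

lemma Codebook.select_congr {ι : Type*} {K Y : ι → Type*} (c : Codebook K Y) {m m' : ∀ i, K i}
    {i : ι} (h : m i = m' i) : c.select m i = c.select m' i := by
  simp only [Codebook.select]
  rw [h]

/-- A decoder which knows the bins of the indices in `sees` and looks for indices in these bins
whose codewords are jointly plausible. -/
structure BinDecoder {ι : Type*} (K Y : ι → Type*) where
  sees : Finset ι
  bin : ∀ i, K i → ℕ
  plausible : Set (∀ i, Y i)
  plausible_congr : ∀ y ∈ plausible, ∀ y', (∀ i ∈ sees, y' i = y i) → y' ∈ plausible

/-- The indices `m` select codewords in `D`, and each of the decoders `dec d` recovers the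
indices it sees from their bins. -/
def IsDecodable {ι : Type*} {K Y : ι → Type*} {Δ : Type*} (D : Finset (∀ i, Y i))
    (dec : Δ → BinDecoder K Y) (c : Codebook K Y) (m : ∀ i, K i) : Prop :=
  c.select m ∈ D ∧ ∀ d m', (∀ i ∈ (dec d).sees, (dec d).bin i (m' i) = (dec d).bin i (m i)) →
    c.select m' ∈ (dec d).plausible → ∀ i ∈ (dec d).sees, m' i = m i

/-- The indices which agree with `m` exactly outside `J` and cannot be told apart from `m` by their
bins. -/
noncomputable def BinDecoder.collisions (dec : BinDecoder K Y) (m : ∀ i, K i) (J : Finset ι) :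
    Finset (∀ i, K i) :=
  Fintype.piFinset fun i =>
    if i ∈ J then univ.filter fun z => dec.bin i z = dec.bin i (m i) ∧ z ≠ m i else {m i}

lemma BinDecoder.card_collisions_le {dec : BinDecoder K Y} {r : ι → ℝ} {m : ∀ i, K i}
    {J : Finset ι} (hr : ∀ i ∈ J, (#{z | dec.bin i z = dec.bin i (m i) ∧ z ≠ m i} : ℝ) ≤ r i) :
    (#(dec.collisions m J) : ℝ) ≤ ∏ i ∈ J, r i := by
  rw [collisions, Fintype.card_piFinset, Nat.cast_prod, ← Fintype.prod_ite_mem J]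
  refine prod_le_prod (fun _ _ => Nat.cast_nonneg _) fun i _ => ?_
  split_ifs with hi
  · exact hr i hi
  · simp

lemma BinDecoder.eq_iff_of_mem_collisions {dec : BinDecoder K Y} {m m' : ∀ i, K i} {J : Finset ι}
    (h : m' ∈ dec.collisions m J) (i : ι) : m i = m' i ↔ i ∉ J := by
  have hi := Fintype.mem_piFinset.mp h i
  split_ifs at hi with hiJ
  · simpa [hiJ] using fun h => (mem_filter.mp hi).2.2 h.symm
  · simpa [hiJ] using (mem_singleton.mp hi).symm

variable [∀ i, Fintype (Y i)]

lemma card_select_eq_mul_prod (m m' : ∀ i, K i) (y y' : ∀ i, Y i) :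
    #{c : Codebook K Y | c.select m = y ∧ c.select m' = y'} *
        ((∏ i, Fintype.card (Y i)) * ∏ i with m i ≠ m' i, Fintype.card (Y i)) =
      if ∀ i, m i = m' i → y' i = y i then Fintype.card (Codebook K Y) else 0 := by
  split_ifs with h
  · let T : Finset (Σ i, K i) := univ.sigma fun i => {m i, m' i}
    let x : Codebook K Y := fun a => if a.2 = m a.1 then y a.1 else y' a.1
    have hprod : (∏ i, Fintype.card (Y i)) * ∏ i with m i ≠ m' i, Fintype.card (Y i) =
        ∏ a ∈ T, Fintype.card (Y a.1) := by
      rw [prod_sigma, prod_filter, ← prod_mul_distrib]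
      refine prod_congr rfl fun i _ => ?_
      by_cases hi : m i = m' i <;> simp [hi]
    have hset : ({c : Codebook K Y | c.select m = y ∧ c.select m' = y'} : Finset _) =
        ({c : Codebook K Y | ∀ a ∈ T, c a = x a} : Finset _) := by
      ext c
      simp only [mem_filter, mem_univ, true_and, funext_iff, Codebook.select, T, mem_sigma,
        mem_insert, mem_singleton, x, Sigma.forall]
      refine ⟨fun hc i k hk => ?_, fun hc => ⟨fun i => ?_, fun i => ?_⟩⟩
      · rcases hk with rfl | rfl
        · simp [hc.1]
        · by_cases hi : m i = m' i
          · simp [hi, hc.2, h i hi]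
          · simp [hc.2, Ne.symm hi]
      · simpa using hc i (m i) (Or.inl rfl)
      · by_cases hi : m i = m' i
        · simpa [hi, h i hi] using hc i (m' i) (Or.inr rfl)
        · simpa [Ne.symm hi] using hc i (m' i) (Or.inr rfl)
    rw [hprod, hset, card_filter_eqOn_mul_prod T x]
  · push Not at h
    obtain ⟨i, hi, hne⟩ := h
    rw [filter_false_of_mem, card_empty, zero_mul]
    rintro c - ⟨rfl, rfl⟩
    exact hne (c.select_congr hi.symm)

lemma card_select_mem_pair_mul_prod (m m' : ∀ i, K i) (F F' : Finset (∀ i, Y i)) :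
    #{c : Codebook K Y | c.select m ∈ F ∧ c.select m' ∈ F'} *
        ((∏ i, Fintype.card (Y i)) * ∏ i with m i ≠ m' i, Fintype.card (Y i)) =
      Fintype.card (Codebook K Y) * ∑ y ∈ F, #{y' ∈ F' | ∀ i, m i = m' i → y' i = y i} := by
  have hfiber : #{c : Codebook K Y | c.select m ∈ F ∧ c.select m' ∈ F'} =
      ∑ p ∈ F ×ˢ F', #{c : Codebook K Y | c.select m = p.1 ∧ c.select m' = p.2} := by
    rw [card_eq_sum_card_fiberwise (f := fun c => (c.select m, c.select m')) (t := F ×ˢ F')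
      fun c hc => by simpa using hc]
    refine sum_congr rfl fun p hp => congrArg card ?_
    ext c
    simp only [mem_product] at hp
    simp only [mem_filter, mem_univ, true_and, Prod.ext_iff]
    constructor
    · exact fun h => h.2
    · rintro ⟨h, h'⟩
      exact ⟨⟨h ▸ hp.1, h' ▸ hp.2⟩, h, h'⟩
  rw [hfiber, sum_mul, mul_sum, sum_product]
  refine sum_congr rfl fun y _ => ?_
  rw [card_filter, mul_sum]
  refine sum_congr rfl fun y' _ => ?_
  rw [card_select_eq_mul_prod]
  split_ifs <;> simp

lemma card_select_mem_mul_prod (m : ∀ i, K i) (F : Finset (∀ i, Y i)) :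
    #{c : Codebook K Y | c.select m ∈ F} * ∏ i, Fintype.card (Y i) =
      Fintype.card (Codebook K Y) * #F := by
  have h := card_select_mem_pair_mul_prod m m F univ
  simp only [mem_univ, and_true, ne_eq, not_true_eq_false, filter_false, prod_empty, mul_one,
    forall_const, ← funext_iff, filter_eq', if_true, card_singleton, sum_const, smul_eq_mul] at h
  exact h

lemma card_select_mem_pair_mul_sq_le {D : Finset (∀ i, Y i)} {k : ℝ} {m m' : ∀ i, K i}
    (hD : ∀ (E : Finset ι), ∀ y ∈ D,
      (#{y' ∈ D | ∀ i ∈ E, y' i = y i} : ℝ) * ∏ i ∈ E, (Fintype.card (Y i) : ℝ) ≤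
        k * #D * ∏ i ∈ E, (Fintype.card (K i) : ℝ)) :
    (#{c : Codebook K Y | c.select m ∈ D ∧ c.select m' ∈ D} : ℝ) *
        (∏ i, (Fintype.card (Y i) : ℝ)) ^ 2 ≤
      Fintype.card (Codebook K Y) * k * #D ^ 2 *
        ∏ i with m i = m' i, (Fintype.card (K i) : ℝ) := by
  set E : Finset ι := {i | m i = m' i} with hE
  have hpair : (#{c : Codebook K Y | c.select m ∈ D ∧ c.select m' ∈ D} : ℝ) *
      ((∏ i, (Fintype.card (Y i) : ℝ)) * ∏ i with m i ≠ m' i, (Fintype.card (Y i) : ℝ)) =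
      Fintype.card (Codebook K Y) * ∑ y ∈ D, (#{y' ∈ D | ∀ i ∈ E, y' i = y i} : ℝ) := by
    simp only [hE, mem_filter, mem_univ, true_and]
    exact_mod_cast card_select_mem_pair_mul_prod m m' D D
  have hsplit : (∏ i ∈ E, (Fintype.card (Y i) : ℝ)) *
      ∏ i with m i ≠ m' i, (Fintype.card (Y i) : ℝ) = ∏ i, (Fintype.card (Y i) : ℝ) :=
    prod_filter_mul_prod_filter_not univ (fun i => m i = m' i) _
  calc (#{c : Codebook K Y | c.select m ∈ D ∧ c.select m' ∈ D} : ℝ) *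
        (∏ i, (Fintype.card (Y i) : ℝ)) ^ 2
      = Fintype.card (Codebook K Y) * ∑ y ∈ D, ((#{y' ∈ D | ∀ i ∈ E, y' i = y i} : ℝ) *
          ∏ i ∈ E, (Fintype.card (Y i) : ℝ)) := by
        rw [← sum_mul, ← mul_assoc, ← hpair, pow_two]
        nth_rewrite 2 [← hsplit]
        ring
    _ ≤ Fintype.card (Codebook K Y) * ∑ _y ∈ D, k * #D * ∏ i ∈ E, (Fintype.card (K i) : ℝ) := by
        exact mul_le_mul_of_nonneg_left (sum_le_sum fun y hy => hD E y hy) (by positivity)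
    _ = _ := by rw [sum_const, nsmul_eq_mul]; ring

lemma sum_card_select_mem_sq (D : Finset (∀ i, Y i)) :
    ∑ c : Codebook K Y, (#{m | c.select m ∈ D} : ℝ) ^ 2 =
      ∑ m : ∀ i, K i, ∑ m' : ∀ i, K i,
        (#{c : Codebook K Y | c.select m ∈ D ∧ c.select m' ∈ D} : ℝ) := by
  have hsq : ∀ c : Codebook K Y, #{m | c.select m ∈ D} ^ 2 =
      #{p : (∀ i, K i) × ∀ i, K i | c.select p.1 ∈ D ∧ c.select p.2 ∈ D} := fun c => by
    rw [← univ_product_univ, filter_product (fun m => c.select m ∈ D) fun m => c.select m ∈ D,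
      card_product, pow_two]
  have hcomm := sum_card_bipartiteAbove_eq_sum_card_bipartiteBelow (s := univ) (t := univ)
    fun (c : Codebook K Y) (p : (∀ i, K i) × ∀ i, K i) => c.select p.1 ∈ D ∧ c.select p.2 ∈ D
  simp only [bipartiteAbove, bipartiteBelow, Fintype.sum_prod_type, ← hsq] at hcomm
  exact_mod_cast hcomm

lemma sum_card_select_mem_sq_mul_le {D : Finset (∀ i, Y i)} {k : ℝ} (hk : 0 ≤ k)
    (hD : ∀ (E : Finset ι), ∀ y ∈ D,
      (#{y' ∈ D | ∀ i ∈ E, y' i = y i} : ℝ) * ∏ i ∈ E, (Fintype.card (Y i) : ℝ) ≤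
        k * #D * ∏ i ∈ E, (Fintype.card (K i) : ℝ)) :
    (∑ c : Codebook K Y, (#{m | c.select m ∈ D} : ℝ) ^ 2) *
        (∏ i, (Fintype.card (Y i) : ℝ)) ^ 2 ≤
      2 ^ Fintype.card ι * k * Fintype.card (Codebook K Y) *
        (#D * ∏ i, (Fintype.card (K i) : ℝ)) ^ 2 := by
  set q : ℝ := ∏ i, (Fintype.card (Y i) : ℝ)
  set b : ℝ := Fintype.card (Codebook K Y) * k * #D ^ 2
  calc (∑ c : Codebook K Y, (#{m | c.select m ∈ D} : ℝ) ^ 2) * q ^ 2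
      ≤ ∑ m : ∀ i, K i, ∑ m' : ∀ i, K i, b * ∏ i with m i = m' i, (Fintype.card (K i) : ℝ) := by
        rw [sum_card_select_mem_sq]
        simp only [sum_mul]
        exact sum_le_sum fun m _ => sum_le_sum fun m' _ => card_select_mem_pair_mul_sq_le hD
    _ ≤ ∑ m : ∀ i, K i, b * (2 ^ Fintype.card ι * ∏ i, (Fintype.card (K i) : ℝ)) := by
        simp only [← mul_sum univ _ b]
        exact mul_le_mul_of_nonneg_left (sum_le_sum fun m _ => sum_prod_agree_le m) (by positivity)
    _ = _ := by
        simp only [sum_const, card_univ, Fintype.card_pi, nsmul_eq_mul, Nat.cast_prod, b]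
        ring

lemma sum_card_select_mem_pair_le {D : Finset (∀ i, Y i)} {dec : BinDecoder K Y}
    {r : ι → ℝ} {R : ℝ} (hR : 0 ≤ R) {m : ∀ i, K i} {J : Finset ι}
    (hr : ∀ i ∈ J, (#{z | dec.bin i z = dec.bin i (m i) ∧ z ≠ m i} : ℝ) ≤ r i)
    (hP : ∀ y ∈ D, (#{y' | y' ∈ dec.plausible ∧ ∀ i ∉ J, y' i = y i} : ℝ) * (∏ i ∈ J, r i) * R ≤
      ∏ i ∈ J, (Fintype.card (Y i) : ℝ)) (hY : ∀ i, Nonempty (Y i)) :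
    (∑ m' ∈ dec.collisions m J,
      (#{c : Codebook K Y | c.select m ∈ D ∧ c.select m' ∈ dec.plausible} : ℝ)) *
        (∏ i, (Fintype.card (Y i) : ℝ)) * R ≤ Fintype.card (Codebook K Y) * #D := by
  set A := dec.collisions m J
  set q : ℝ := ∏ i ∈ J, (Fintype.card (Y i) : ℝ)
  have hq : 0 < q := prod_pos fun i _ => by exact_mod_cast Fintype.card_pos_iff.mpr (hY i)
  set s : ℝ := ∑ y ∈ D, (#{y' | y' ∈ dec.plausible ∧ ∀ i ∉ J, y' i = y i} : ℝ)
  have hs : 0 ≤ s := sum_nonneg fun _ _ => Nat.cast_nonneg _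
  have hA : (#A : ℝ) ≤ ∏ i ∈ J, r i := BinDecoder.card_collisions_le hr
  have hpair : ∀ m' ∈ A, (#{c : Codebook K Y | c.select m ∈ D ∧ c.select m' ∈ dec.plausible} : ℝ) *
      ((∏ i, (Fintype.card (Y i) : ℝ)) * q) = Fintype.card (Codebook K Y) * s := by
    intro m' hm'
    have hJ := BinDecoder.eq_iff_of_mem_collisions hm'
    have hne : ({i | m i ≠ m' i} : Finset ι) = J := by ext i; simp [hJ]
    have h := card_select_mem_pair_mul_prod m m' D {y | y ∈ dec.plausible}
    simp only [mem_filter, mem_univ, true_and, hne, hJ, filter_filter] at h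
    simp only [q, s]
    exact_mod_cast h
  refine le_of_mul_le_mul_right ?_ hq
  calc (∑ m' ∈ A, (#{c : Codebook K Y | c.select m ∈ D ∧ c.select m' ∈ dec.plausible} : ℝ)) *
        (∏ i, (Fintype.card (Y i) : ℝ)) * R * q
      = #A * (Fintype.card (Codebook K Y) * s) * R := by
        rw [← nsmul_eq_mul (#A), ← sum_const, ← sum_congr rfl hpair, ← sum_mul]
        ring
    _ ≤ (∏ i ∈ J, r i) * (Fintype.card (Codebook K Y) * s) * R :=
        mul_le_mul_of_nonneg_right
          (mul_le_mul_of_nonneg_right hA (mul_nonneg (Nat.cast_nonneg _) hs)) hR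
    _ = Fintype.card (Codebook K Y) * ∑ y ∈ D,
          (#{y' | y' ∈ dec.plausible ∧ ∀ i ∉ J, y' i = y i} : ℝ) * (∏ i ∈ J, r i) * R := by
        rw [← sum_mul, ← sum_mul]
        ring
    _ ≤ Fintype.card (Codebook K Y) * ∑ _y ∈ D, q := by
        exact mul_le_mul_of_nonneg_left (sum_le_sum hP) (by positivity)
    _ = Fintype.card (Codebook K Y) * #D * q := by rw [sum_const, nsmul_eq_mul, mul_assoc]

variable {Δ : Type*} [Fintype Δ]

lemma filter_select_mem_and_not_isDecodable_subset (D : Finset (∀ i, Y i))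
    (dec : Δ → BinDecoder K Y) (m : ∀ i, K i) :
    ({c : Codebook K Y | c.select m ∈ D ∧ ¬ IsDecodable D dec c m} : Finset _) ⊆
      ({p | p.2 ⊆ (dec p.1).sees ∧ p.2.Nonempty} : Finset (Δ × Finset ι)).biUnion fun p =>
        ((dec p.1).collisions m p.2).biUnion fun m' =>
          {c : Codebook K Y | c.select m ∈ D ∧ c.select m' ∈ (dec p.1).plausible} := by
  intro c hc
  obtain ⟨hcD, hc⟩ := (mem_filter.mp hc).2
  simp only [IsDecodable, hcD, true_and, not_forall] at hc
  obtain ⟨d, m', hbin, hplausible, i, hi, hne⟩ := hc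
  have hpl := (dec d).plausible_congr _ hplausible
    (c.select fun i => if i ∈ (dec d).sees then m' i else m i)
    fun i hi => c.select_congr (if_pos hi)
  refine mem_biUnion.mpr ⟨(d, {i ∈ (dec d).sees | m' i ≠ m i}),
    mem_filter.mpr ⟨mem_univ _, filter_subset _ _, i, mem_filter.mpr ⟨hi, hne⟩⟩,
    mem_biUnion.mpr ⟨_, Fintype.mem_piFinset.mpr fun i => ?_,
      mem_filter.mpr ⟨mem_univ _, hcD, hpl⟩⟩⟩
  by_cases hi : i ∈ (dec d).sees <;> by_cases hm : m' i = m i <;> simp [hi, hm, hbin]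

lemma card_select_mem_and_not_isDecodable_mul_le (D : Finset (∀ i, Y i))
    (dec : Δ → BinDecoder K Y) {r : Δ → ι → ℝ} {m : ∀ i, K i}
    (hr : ∀ d i, (#{z | (dec d).bin i z = (dec d).bin i (m i) ∧ z ≠ m i} : ℝ) ≤ r d i)
    (hP : ∀ d, ∀ J ⊆ (dec d).sees, J.Nonempty → ∀ y ∈ D,
      (#{y' | y' ∈ (dec d).plausible ∧ ∀ i ∉ J, y' i = y i} : ℝ) * (∏ i ∈ J, r d i) *
        (2 * Fintype.card Δ * 2 ^ Fintype.card ι) ≤ ∏ i ∈ J, (Fintype.card (Y i) : ℝ))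
    (hY : ∀ i, Nonempty (Y i)) :
    2 * (#{c : Codebook K Y | c.select m ∈ D ∧ ¬ IsDecodable D dec c m} : ℝ) *
        ∏ i, (Fintype.card (Y i) : ℝ) ≤
      Fintype.card (Codebook K Y) * #D := by
  have hcover := filter_select_mem_and_not_isDecodable_subset D dec m
  set T : Finset (Δ × Finset ι) := {p | p.2 ⊆ (dec p.1).sees ∧ p.2.Nonempty}
  rcases isEmpty_or_nonempty Δ with hΔ | hΔ
  · have hT : T = ∅ := Subsingleton.elim _ _
    rw [hT, biUnion_empty, subset_empty] at hcover
    rw [hcover, card_empty, Nat.cast_zero, mul_zero, zero_mul]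
    positivity
  set q : ℝ := ∏ i, (Fintype.card (Y i) : ℝ)
  set w : ℝ := Fintype.card Δ * 2 ^ Fintype.card ι
  have hw : 0 < w := by positivity
  refine le_of_mul_le_mul_right ?_ hw
  calc 2 * (#{c : Codebook K Y | c.select m ∈ D ∧ ¬ IsDecodable D dec c m} : ℝ) * q * w
      ≤ 2 * (∑ p ∈ T, ∑ m' ∈ (dec p.1).collisions m p.2,
          (#{c : Codebook K Y | c.select m ∈ D ∧ c.select m' ∈ (dec p.1).plausible} : ℝ)) *
          q * w := by
        gcongr
        exact_mod_cast (card_le_card hcover).trans (card_biUnion_le.trans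
          (sum_le_sum fun p _ => card_biUnion_le))
    _ = ∑ p ∈ T, (∑ m' ∈ (dec p.1).collisions m p.2,
          (#{c : Codebook K Y | c.select m ∈ D ∧ c.select m' ∈ (dec p.1).plausible} : ℝ)) * q *
          (2 * Fintype.card Δ * 2 ^ Fintype.card ι) := by
        simp only [w, ← sum_mul]
        ring
    _ ≤ ∑ _p ∈ T, ((Fintype.card (Codebook K Y) : ℝ) * #D) := by
        refine sum_le_sum fun p hp => ?_
        obtain ⟨hsub, hne⟩ := (mem_filter.mp hp).2
        exact sum_card_select_mem_pair_le (by positivity) (fun i _ => hr p.1 i)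
          (hP p.1 p.2 hsub hne) hY
    _ ≤ ((Fintype.card (Codebook K Y) : ℝ) * #D) * w := by
        rw [sum_const, nsmul_eq_mul, mul_comm]
        gcongr
        have hT : #T ≤ Fintype.card (Δ × Finset ι) := card_le_univ T
        rw [Fintype.card_prod, Fintype.card_finset] at hT
        simp only [w]
        exact_mod_cast hT

lemma sum_card_isDecodable_mul_ge (D : Finset (∀ i, Y i)) (dec : Δ → BinDecoder K Y)
    {r : Δ → ι → ℝ}
    (hr : ∀ d i k, (#{z | (dec d).bin i z = (dec d).bin i k ∧ z ≠ k} : ℝ) ≤ r d i)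
    (hP : ∀ d, ∀ J ⊆ (dec d).sees, J.Nonempty → ∀ y ∈ D,
      (#{y' | y' ∈ (dec d).plausible ∧ ∀ i ∉ J, y' i = y i} : ℝ) * (∏ i ∈ J, r d i) *
        (2 * Fintype.card Δ * 2 ^ Fintype.card ι) ≤ ∏ i ∈ J, (Fintype.card (Y i) : ℝ))
    (hY : ∀ i, Nonempty (Y i)) :
    Fintype.card (Codebook K Y) * (#D * ∏ i, (Fintype.card (K i) : ℝ)) ≤
      2 * (∑ c : Codebook K Y, (#{m | IsDecodable D dec c m} : ℝ)) *
        ∏ i, (Fintype.card (Y i) : ℝ) := by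
  set q : ℝ := ∏ i, (Fintype.card (Y i) : ℝ)
  have hswap : ∑ c : Codebook K Y, (#{m | IsDecodable D dec c m} : ℝ) =
      ∑ m, (#{c : Codebook K Y | IsDecodable D dec c m} : ℝ) := by
    exact_mod_cast sum_card_bipartiteAbove_eq_sum_card_bipartiteBelow (s := univ) (t := univ)
      (IsDecodable D dec)
  have hm : ∀ m, ((Fintype.card (Codebook K Y) : ℝ) * #D) ≤
      2 * (#{c : Codebook K Y | IsDecodable D dec c m} : ℝ) * q := by
    intro m
    have hall : (#{c : Codebook K Y | c.select m ∈ D} : ℝ) * q =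
        Fintype.card (Codebook K Y) * #D := by
      simp only [q]
      exact_mod_cast card_select_mem_mul_prod m D
    have hbad := card_select_mem_and_not_isDecodable_mul_le D dec (fun d i => hr d i (m i)) hP hY
    have hsplit : (#{c : Codebook K Y | c.select m ∈ D} : ℝ) =
        #{c : Codebook K Y | IsDecodable D dec c m} +
          #{c : Codebook K Y | c.select m ∈ D ∧ ¬ IsDecodable D dec c m} := by
      have h := card_filter_add_card_filter_not (s := {c : Codebook K Y | c.select m ∈ D})
        fun c => IsDecodable D dec c m
      rw [filter_filter, filter_filter] at h
      have hgood : ∀ c : Codebook K Y, c.select m ∈ D ∧ IsDecodable D dec c m ↔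
          IsDecodable D dec c m := fun c => and_iff_right_of_imp And.left
      simp only [hgood] at h
      exact_mod_cast h.symm
    rw [hsplit] at hall
    linarith
  calc (Fintype.card (Codebook K Y) : ℝ) * (#D * ∏ i, (Fintype.card (K i) : ℝ))
      = ∑ _m : ∀ i, K i, ((Fintype.card (Codebook K Y) : ℝ) * #D) := by
        simp only [sum_const, card_univ, Fintype.card_pi, nsmul_eq_mul, Nat.cast_prod]
        ring
    _ ≤ ∑ m, 2 * (#{c : Codebook K Y | IsDecodable D dec c m} : ℝ) * q :=
        sum_le_sum fun m _ => hm m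
    _ = _ := by rw [hswap, ← sum_mul, ← mul_sum]

-- Cauchy–Schwarz bounds the number of good codebooks from below by the first two moments of the
-- number of indices selecting an element of `D`.
lemma card_codebook_le_card_isDecodable {D : Finset (∀ i, Y i)} (hDne : D.Nonempty)
    (dec : Δ → BinDecoder K Y) {k : ℝ} (hk : 0 ≤ k) {r : Δ → ι → ℝ}
    (hD : ∀ (E : Finset ι), ∀ y ∈ D,
      (#{y' ∈ D | ∀ i ∈ E, y' i = y i} : ℝ) * ∏ i ∈ E, (Fintype.card (Y i) : ℝ) ≤
        k * #D * ∏ i ∈ E, (Fintype.card (K i) : ℝ))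
    (hr : ∀ d i k, (#{z | (dec d).bin i z = (dec d).bin i k ∧ z ≠ k} : ℝ) ≤ r d i)
    (hP : ∀ d, ∀ J ⊆ (dec d).sees, J.Nonempty → ∀ y ∈ D,
      (#{y' | y' ∈ (dec d).plausible ∧ ∀ i ∉ J, y' i = y i} : ℝ) * (∏ i ∈ J, r d i) *
        (2 * Fintype.card Δ * 2 ^ Fintype.card ι) ≤ ∏ i ∈ J, (Fintype.card (Y i) : ℝ))
    (hY : ∀ i, Nonempty (Y i)) (hK : ∀ i, Nonempty (K i)) :
    (Fintype.card (Codebook K Y) : ℝ) ≤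
      4 * 2 ^ Fintype.card ι * k * #{c : Codebook K Y | ∃ m, IsDecodable D dec c m} := by
  set C : ℝ := (Fintype.card (Codebook K Y) : ℝ)
  set w : ℝ := #D * ∏ i, (Fintype.card (K i) : ℝ)
  set q : ℝ := ∏ i, (Fintype.card (Y i) : ℝ)
  set G : Finset (Codebook K Y) := {c | ∃ m, IsDecodable D dec c m}
  let N : Codebook K Y → ℝ := fun c => #{m | IsDecodable D dec c m}
  have hC : 0 < C := by simp only [C]; positivity
  have hw : 0 < w := mul_pos (by exact_mod_cast hDne.card_pos)
    (prod_pos fun i _ => by exact_mod_cast Fintype.card_pos_iff.mpr (hK i))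
  have hfirst : C * w ≤ 2 * (∑ c, N c) * q := sum_card_isDecodable_mul_ge D dec hr hP hY
  have hsecond : (∑ c, N c ^ 2) * q ^ 2 ≤ 2 ^ Fintype.card ι * k * C * w ^ 2 := by
    refine le_trans ?_ (sum_card_select_mem_sq_mul_le hk hD)
    gcongr with c
    exact Nat.cast_le.mpr (card_le_card (monotone_filter_right _ fun m _ => And.left))
  have hsupp : ∑ c, N c = ∑ c ∈ G, N c := by
    refine (sum_subset (subset_univ G) fun c _ hc => ?_).symm
    simp only [G, mem_filter, mem_univ, true_and, not_exists] at hc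
    simp [N, hc]
  have hcauchy : (∑ c, N c) ^ 2 ≤ #G * ∑ c, N c ^ 2 := by
    rw [hsupp]
    refine sq_sum_le_card_mul_sum_sq.trans ?_
    gcongr
    exact subset_univ G
  refine le_of_mul_le_mul_right (a := C * w ^ 2) ?_ (by positivity)
  calc C * (C * w ^ 2) = (C * w) ^ 2 := by ring
    _ ≤ (2 * (∑ c, N c) * q) ^ 2 := by gcongr
    _ = 4 * (∑ c, N c) ^ 2 * q ^ 2 := by ring
    _ ≤ 4 * (#G * ∑ c, N c ^ 2) * q ^ 2 := by gcongr
    _ = 4 * #G * ((∑ c, N c ^ 2) * q ^ 2) := by ring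
    _ ≤ 4 * #G * (2 ^ Fintype.card ι * k * C * w ^ 2) := by gcongr
    _ = 4 * 2 ^ Fintype.card ι * k * #G * (C * w ^ 2) := by ring

end RandomCodebooks

section TypeClasses

open Finset
open scoped Classical

variable {I A A' : Type*} [Fintype I] [Fintype A] [Fintype A']

/-- The type class of a sequence, that is, the set of its rearrangements. -/
@[irreducible] noncomputable def typeClass (x : I → A) : Finset (I → A) :=
  univ.filter fun f => ∃ σ : Equiv.Perm I, f = x ∘ σ

lemma mem_typeClass {x f : I → A} : f ∈ typeClass x ↔ ∃ σ : Equiv.Perm I, f = x ∘ σ := by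
  simp [typeClass]

lemma self_mem_typeClass (x : I → A) : x ∈ typeClass x :=
  mem_typeClass.mpr ⟨1, rfl⟩

lemma card_typeClass_pos (x : I → A) : 0 < #(typeClass x) :=
  card_pos.mpr ⟨x, self_mem_typeClass x⟩

lemma comp_mem_typeClass (π : A → A') {x f : I → A} (hf : f ∈ typeClass x) :
    π ∘ f ∈ typeClass (π ∘ x) := by
  obtain ⟨σ, rfl⟩ := mem_typeClass.mp hf
  exact mem_typeClass.mpr ⟨σ, rfl⟩

lemma comp_perm_mem_typeClass {x f : I → A} (hf : f ∈ typeClass x) (τ : Equiv.Perm I) :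
    f ∘ τ ∈ typeClass x := by
  obtain ⟨σ, rfl⟩ := mem_typeClass.mp hf
  exact mem_typeClass.mpr ⟨τ.trans σ, rfl⟩

lemma card_filter_comp_eq_mul_card_typeClass (π : A → A') (x : I → A) {y : I → A'}
    (hy : y ∈ typeClass (π ∘ x)) :
    #{f ∈ typeClass x | π ∘ f = y} * #(typeClass (π ∘ x)) = #(typeClass x) := by
  have hle : ∀ (σ σ' : Equiv.Perm I), #{f ∈ typeClass x | π ∘ f = (π ∘ x) ∘ σ} ≤
      #{f ∈ typeClass x | π ∘ f = (π ∘ x) ∘ σ'} := by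
    refine fun σ σ' => card_le_card_of_injOn (fun f => f ∘ (σ'.trans σ.symm)) (fun f hf => ?_)
      ((σ'.trans σ.symm).surjective.injective_comp_right.injOn)
    obtain ⟨hfx, hfσ⟩ := mem_filter.mp hf
    refine mem_filter.mpr ⟨comp_perm_mem_typeClass hfx _, ?_⟩
    rw [← Function.comp_assoc, hfσ]
    funext j
    simp
  have hconst : ∀ y' ∈ typeClass (π ∘ x),
      #{f ∈ typeClass x | π ∘ f = y'} = #{f ∈ typeClass x | π ∘ f = y} := by
    intro y' hy'
    obtain ⟨σ, rfl⟩ := mem_typeClass.mp hy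
    obtain ⟨σ', rfl⟩ := mem_typeClass.mp hy'
    exact (hle σ' σ).antisymm (hle σ σ')
  rw [card_eq_sum_card_fiberwise (f := (π ∘ ·)) (t := typeClass (π ∘ x))
    fun f hf => comp_mem_typeClass π hf, sum_congr rfl hconst, sum_const, smul_eq_mul, mul_comm]

lemma card_mul_card_typeClass_comp_le (π : A → A') {x : I → A} {y : I → A'}
    (hy : y ∈ typeClass (π ∘ x)) {α : Type*} {s : Finset α} {g : α → I → A}
    (hg : Set.InjOn g s) (hgx : ∀ a ∈ s, g a ∈ typeClass x) (hgy : ∀ a ∈ s, π ∘ g a = y) :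
    #s * #(typeClass (π ∘ x)) ≤ #(typeClass x) := by
  rw [← card_filter_comp_eq_mul_card_typeClass π x hy]
  exact Nat.mul_le_mul_right _ (card_le_card_of_injOn g
    (fun a ha => mem_filter.mpr ⟨hgx a ha, hgy a ha⟩) hg)

lemma card_typeClass_le_card_mul (π : A → A') {x : I → A} {y : I → A'}
    (hy : y ∈ typeClass (π ∘ x)) {α : Type*} {s : Finset α} (g : α → I → A)
    (hg : ∀ f ∈ typeClass x, π ∘ f = y → ∃ a ∈ s, g a = f) :
    #(typeClass x) ≤ #s * #(typeClass (π ∘ x)) := by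
  rw [← card_filter_comp_eq_mul_card_typeClass π x hy]
  exact Nat.mul_le_mul_right _ (card_le_card_of_surjOn g fun f hf =>
    hg f (mem_filter.mp hf).1 (mem_filter.mp hf).2)

lemma card_typeClass_mul_prod_factorial [DecidableEq A] (x : I → A) :
    #(typeClass x) * ∏ a, (#{j | x j = a}).factorial = (Fintype.card I).factorial := by
  have hstab : #{σ : Equiv.Perm I | x ∘ σ = x} = ∏ a, (#{j | x j = a}).factorial := by
    have h := DomMulAct.stabilizer_card x
    simp only [Fintype.card_subtype] at h
    exact h
  have hfiber : ∀ f ∈ typeClass x, #{σ : Equiv.Perm I | x ∘ σ = f} =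
      ∏ a, (#{j | x j = a}).factorial := by
    intro f hf
    obtain ⟨τ, rfl⟩ := mem_typeClass.mp hf
    rw [← hstab]
    refine card_bij' (fun σ _ => τ.symm.trans σ) (fun σ _ => τ.trans σ) ?_ ?_ ?_ ?_
    · intro σ hσ
      rw [mem_filter] at hσ ⊢
      refine ⟨mem_univ _, funext fun j => ?_⟩
      simpa using congrFun hσ.2 (τ.symm j)
    · intro σ hσ
      rw [mem_filter] at hσ ⊢
      exact ⟨mem_univ _, funext fun j => congrFun hσ.2 (τ j)⟩
    · exact fun σ _ => by ext; simp
    · exact fun σ _ => by ext; simp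
  rw [← Fintype.card_perm, ← card_univ,
    card_eq_sum_card_fiberwise (f := fun σ : Equiv.Perm I => x ∘ σ) (t := typeClass x)
      fun σ _ => mem_typeClass.mpr ⟨σ, rfl⟩,
    sum_congr rfl hfiber, sum_const, smul_eq_mul]

variable {γ 𝒱 ι : Type*} [Fintype γ] [Fintype 𝒱] [Fintype ι] [DecidableEq ι]

/-- The tuples of codewords whose joint type with the sequence `w` is that of `(x, v)`. -/
@[irreducible] noncomputable def jointlyTypical (x : ι → I → γ) (v w : I → 𝒱) :
    Finset (∀ i, ↥(typeClass (x i))) :=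
  univ.filter fun y =>
    (fun j => ((fun i => (y i).1 j), w j)) ∈ typeClass fun j => ((fun i => x i j), v j)

/-- The decoder which sees the bins of the descriptions in `B` and looks for codewords whose joint
type on `B` is that of `x`. -/
noncomputable def typicalDecoder {K : ι → Type*} (x : ι → I → γ) (B : Finset ι)
    (bin : ∀ i, K i → ℕ) : BinDecoder K fun i => ↥(typeClass (x i)) where
  sees := B
  bin := bin
  plausible := {y | (fun j (i : B) => (y i).1 j) ∈ typeClass fun j (i : B) => x i j}
  plausible_congr y hy y' h := by
    have heq : (fun j (i : B) => (y' i).1 j) = fun j (i : B) => (y i).1 j := by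
      funext j i
      rw [h i i.2]
    rwa [Set.mem_ofPred_eq, heq]

variable {x : ι → I → γ} {v w : I → 𝒱}

lemma mem_jointlyTypical {y : ∀ i, ↥(typeClass (x i))} : y ∈ jointlyTypical x v w ↔
    (fun j => ((fun i => (y i).1 j), w j)) ∈ typeClass fun j => ((fun i => x i j), v j) := by
  simp [jointlyTypical]

lemma card_typeClass_le_card_jointlyTypical_mul (hw : w ∈ typeClass v) :
    #(typeClass fun j => ((fun i => x i j), v j)) ≤
      #(jointlyTypical x v w) * #(typeClass v) := by
  refine card_typeClass_le_card_mul Prod.snd (x := fun j => ((fun i => x i j), v j)) hw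
    (fun y j => ((fun i => (y i).1 j), w j)) fun f hf hfw => ?_
  have hf_eq : (fun j => ((f j).1, w j)) = f := by
    rw [← hfw]
    rfl
  exact ⟨fun i => ⟨fun j => (f j).1 i, comp_mem_typeClass (fun a : (ι → γ) × 𝒱 => a.1 i) hf⟩,
    mem_jointlyTypical.mpr (by rwa [hf_eq]), hf_eq⟩

lemma jointlyTypical_nonempty (hw : w ∈ typeClass v) : (jointlyTypical x v w).Nonempty :=
  card_pos.mp (Nat.pos_of_mul_pos_right
    ((card_typeClass_pos _).trans_le (card_typeClass_le_card_jointlyTypical_mul hw)))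

lemma card_filter_jointlyTypical_mul_le {y : ∀ i, ↥(typeClass (x i))}
    (hy : y ∈ jointlyTypical x v w) (E : Finset ι) :
    #{y' ∈ jointlyTypical x v w | ∀ i ∈ E, y' i = y i} *
        #(typeClass fun j => ((fun i : E => x i j), v j)) ≤
      #(typeClass fun j => ((fun i => x i j), v j)) := by
  let π : (ι → γ) × 𝒱 → (E → γ) × 𝒱 := fun a => ((fun i => a.1 i), a.2)
  refine card_mul_card_typeClass_comp_le π (x := fun j => ((fun i => x i j), v j))
    (comp_mem_typeClass π (mem_jointlyTypical.mp hy))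
    (g := fun y' j => ((fun i => (y' i).1 j), w j)) (fun y₁ _ y₂ _ h => ?_)
    (fun y' hy' => mem_jointlyTypical.mp (mem_filter.mp hy').1) fun y' hy' => funext fun j => ?_
  · funext i
    exact Subtype.ext (funext fun j => congrFun (congrArg Prod.fst (congrFun h j)) i)
  · refine Prod.ext (funext fun i => ?_) rfl
    simp only [Function.comp_apply, π, (mem_filter.mp hy').2 i i.2]

lemma card_plausible_mul_le {K : ι → Type*} {bin : ∀ i, K i → ℕ}
    {y : ∀ i, ↥(typeClass (x i))} (hy : y ∈ jointlyTypical x v w) {B J : Finset ι} (hJ : J ⊆ B) :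
    #{y' | y' ∈ (typicalDecoder x B bin).plausible ∧ ∀ i ∉ J, y' i = y i} *
        #(typeClass fun j (i : ↥(B \ J)) => x i j) ≤
      #(typeClass fun j (i : B) => x i j) := by
  let π : (B → γ) → (↥(B \ J) → γ) := fun a i => a ⟨i, (mem_sdiff.mp i.2).1⟩
  have hyB : (fun j (i : B) => (y i).1 j) ∈ typeClass fun j (i : B) => x i j :=
    comp_mem_typeClass (fun (a : (ι → γ) × 𝒱) (i : B) => a.1 i) (mem_jointlyTypical.mp hy)
  refine card_mul_card_typeClass_comp_le π (x := fun j (i : B) => x i j)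
    (comp_mem_typeClass π hyB) (g := fun y' j (i : B) => (y' i).1 j) (fun y₁ hy₁ y₂ hy₂ h => ?_)
    (fun y' hy' => (mem_filter.mp hy').2.1) fun y' hy' => funext fun j => funext fun i => ?_
  · funext i
    by_cases hi : i ∈ B
    · exact Subtype.ext (funext fun j => congrFun (congrFun h j) ⟨i, hi⟩)
    · have hiJ : i ∉ J := fun h => hi (hJ h)
      rw [(mem_filter.mp hy₁).2.2 i hiJ, (mem_filter.mp hy₂).2.2 i hiJ]
  · simp only [Function.comp_apply, π, (mem_filter.mp hy').2.2 i (mem_sdiff.mp i.2).2]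

/-- The packing and covering conditions on the sizes of the type classes of `(x, v)` under which
a random codebook with index sets `K` works: a typical `v` is jointly typical with some selected
codewords, and for each `d` the bins on `B d`, containing at most `r d i` further indices each,
determine the selected indices on `B d`. The constant `k` is the covering slack. -/
structure IsCodable {Δ : Type*} [Fintype Δ] (K : ι → Type*) [∀ i, Fintype (K i)]
    (x : ι → I → γ) (v : I → 𝒱) (B : Δ → Finset ι) (r : Δ → ι → ℝ) (k : ℝ) : Prop where
  covering : ∀ E : Finset ι, (#(typeClass v) : ℝ) * ∏ i ∈ E, (#(typeClass (x i)) : ℝ) ≤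
    k * #(typeClass fun j => ((fun i : E => x i j), v j)) * ∏ i ∈ E, (Fintype.card (K i) : ℝ)
  packing : ∀ d, ∀ J ⊆ B d, J.Nonempty →
    (#(typeClass fun j (i : B d) => x i j) : ℝ) * (∏ i ∈ J, r d i) *
        (2 * Fintype.card Δ * 2 ^ Fintype.card ι) ≤
      #(typeClass fun j (i : ↥(B d \ J)) => x i j) * ∏ i ∈ J, (#(typeClass (x i)) : ℝ)

variable {K : ι → Type*} [∀ i, Fintype (K i)] {Δ : Type*} [Fintype Δ] {B : Δ → Finset ι}
  {r : Δ → ι → ℝ} {k : ℝ}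

lemma IsCodable.card_filter_jointlyTypical_mul_prod_le (h : IsCodable K x v B r k)
    (hw : w ∈ typeClass v) (E : Finset ι) {y : ∀ i, ↥(typeClass (x i))}
    (hy : y ∈ jointlyTypical x v w) :
    (#{y' ∈ jointlyTypical x v w | ∀ i ∈ E, y' i = y i} : ℝ) *
        ∏ i ∈ E, (Fintype.card ↥(typeClass (x i)) : ℝ) ≤
      k * #(jointlyTypical x v w) * ∏ i ∈ E, (Fintype.card (K i) : ℝ) := by
  simp only [Fintype.card_coe]
  set TE := (#(typeClass fun j => ((fun i : E => x i j), v j)) : ℝ)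
  set T := (#(typeClass fun j => ((fun i => x i j), v j)) : ℝ)
  set Tv := (#(typeClass v) : ℝ)
  have hTE : 0 < TE := Nat.cast_pos.mpr (card_typeClass_pos _)
  have hTv : 0 < Tv := Nat.cast_pos.mpr (card_typeClass_pos _)
  have hagree : (#{y' ∈ jointlyTypical x v w | ∀ i ∈ E, y' i = y i} : ℝ) * TE ≤ T := by
    simp only [TE, T]
    exact_mod_cast card_filter_jointlyTypical_mul_le hy E
  have hall : T ≤ #(jointlyTypical x v w) * Tv := by
    simp only [T, Tv]
    exact_mod_cast card_typeClass_le_card_jointlyTypical_mul (x := x) hw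
  have hcov := h.covering E
  refine le_of_mul_le_mul_right (a := Tv * TE) ?_ (by positivity)
  calc (#{y' ∈ jointlyTypical x v w | ∀ i ∈ E, y' i = y i} : ℝ) *
        (∏ i ∈ E, (#(typeClass (x i)) : ℝ)) * (Tv * TE)
      = (#{y' ∈ jointlyTypical x v w | ∀ i ∈ E, y' i = y i} : ℝ) * TE *
          (Tv * ∏ i ∈ E, (#(typeClass (x i)) : ℝ)) := by ring
    _ ≤ #(jointlyTypical x v w) * Tv * (k * TE * ∏ i ∈ E, (Fintype.card (K i) : ℝ)) := by
        exact mul_le_mul (hagree.trans hall) hcov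
          (mul_nonneg hTv.le (prod_nonneg fun i _ => Nat.cast_nonneg _))
          (mul_nonneg (Nat.cast_nonneg _) hTv.le)
    _ = _ := by ring

lemma IsCodable.card_plausible_mul_prod_le (h : IsCodable K x v B r k) {bin : ∀ i, K i → ℕ}
    {d : Δ} (hr : ∀ i, 0 ≤ r d i) {J : Finset ι} (hJ : J ⊆ B d) (hJne : J.Nonempty)
    {y : ∀ i, ↥(typeClass (x i))} (hy : y ∈ jointlyTypical x v w) :
    (#{y' | y' ∈ (typicalDecoder x (B d) bin).plausible ∧ ∀ i ∉ J, y' i = y i} : ℝ) *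
        (∏ i ∈ J, r d i) * (2 * Fintype.card Δ * 2 ^ Fintype.card ι) ≤
      ∏ i ∈ J, (Fintype.card ↥(typeClass (x i)) : ℝ) := by
  simp only [Fintype.card_coe]
  set TJ := (#(typeClass fun j (i : ↥(B d \ J)) => x i j) : ℝ)
  have hTJ : 0 < TJ := Nat.cast_pos.mpr (card_typeClass_pos _)
  have hr' : 0 ≤ ∏ i ∈ J, r d i := prod_nonneg fun i _ => hr i
  have hagree : (#{y' | y' ∈ (typicalDecoder x (B d) bin).plausible ∧ ∀ i ∉ J, y' i = y i} : ℝ) *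
      TJ ≤ #(typeClass fun j (i : B d) => x i j) := by
    simp only [TJ]
    exact_mod_cast card_plausible_mul_le hy hJ
  refine le_of_mul_le_mul_left ?_ hTJ
  refine le_trans ?_ (h.packing d J hJ hJne)
  rw [mul_comm TJ, mul_right_comm, mul_right_comm _ _ TJ]
  exact mul_le_mul_of_nonneg_right (mul_le_mul_of_nonneg_right hagree hr') (by positivity)

theorem IsCodable.card_codebook_le (h : IsCodable K x v B r k) (hk : 0 ≤ k) (hr : ∀ d i, 0 ≤ r d i)
    (hK : ∀ i, Nonempty (K i)) (bin : Δ → ∀ i, K i → ℕ)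
    (hbin : ∀ d i m, (#{z | bin d i z = bin d i m ∧ z ≠ m} : ℝ) ≤ r d i)
    (hw : w ∈ typeClass v) :
    (Fintype.card (Codebook K fun i => ↥(typeClass (x i))) : ℝ) ≤ 4 * 2 ^ Fintype.card ι * k *
      #{c | ∃ m, IsDecodable (jointlyTypical x v w) (fun d => typicalDecoder x (B d) (bin d))
        c m} :=
  card_codebook_le_card_isDecodable (jointlyTypical_nonempty hw) _ hk
    (fun E y hy => by convert h.card_filter_jointlyTypical_mul_prod_le hw E hy) hbin
    (fun d J hJ hJne y hy => by convert h.card_plausible_mul_prod_le (hr d) hJ hJne hy)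
    (fun i => ⟨x i, self_mem_typeClass (x i)⟩) hK

end TypeClasses

section Covering

open Finset
open scoped Classical

lemma card_filter_forall_not_le {C κ : Type*} [Fintype C] [Fintype κ] {R : C → Prop} {d : ℝ}
    (hd : d * Fintype.card C ≤ #{c | R c}) :
    (#{f : κ → C | ∀ a, ¬ R (f a)} : ℝ) ≤
      Real.exp (-(d * Fintype.card κ)) * Fintype.card C ^ Fintype.card κ := by
  have hpi : ({f : κ → C | ∀ a, ¬ R (f a)} : Finset (κ → C)) =
      Fintype.piFinset fun _ => {c | ¬ R c} := by
    ext f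
    simp
  have hsplit : (#{c | R c} : ℝ) + #{c | ¬ R c} = Fintype.card C := by
    exact_mod_cast card_filter_add_card_filter_not (s := univ) R
  have hone : (#{c | ¬ R c} : ℝ) ≤ Real.exp (-d) * Fintype.card C := by
    have hexp := mul_le_mul_of_nonneg_right (Real.add_one_le_exp (-d))
      (Nat.cast_nonneg (Fintype.card C))
    linarith [hd]
  rw [hpi, Fintype.card_piFinset, prod_const, card_univ, Nat.cast_pow]
  refine (pow_le_pow_left₀ (Nat.cast_nonneg _) hone _).trans_eq ?_
  rw [mul_pow, ← Real.exp_nat_mul, mul_neg, mul_comm d]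

lemma exists_cover {C W κ : Type*} [Fintype C] [Nonempty C] [Fintype W] [Fintype κ]
    {R : C → W → Prop} {d : ℝ} (hd : ∀ w, d * Fintype.card C ≤ #{c | R c w})
    (hκ : Real.log (Fintype.card W) < d * Fintype.card κ) :
    ∃ f : κ → C, ∀ w, ∃ a, R (f a) w := by
  by_contra! hbad
  have hC : (0 : ℝ) < Fintype.card C := Nat.cast_pos.mpr Fintype.card_pos
  have hW : (0 : ℝ) < Fintype.card W :=
    Nat.cast_pos.mpr (Fintype.card_pos_iff.mpr ⟨(hbad fun _ => Classical.arbitrary C).choose⟩)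
  have hunion : (Fintype.card C : ℝ) ^ Fintype.card κ ≤
      ∑ w, (#{f : κ → C | ∀ a, ¬ R (f a) w} : ℝ) := by
    have hle : #(univ : Finset (κ → C)) ≤ ∑ w, #{f : κ → C | ∀ a, ¬ R (f a) w} := by
      refine (card_le_card fun f _ => ?_).trans card_biUnion_le
      obtain ⟨w, hw⟩ := hbad f
      exact mem_biUnion.mpr ⟨w, mem_univ _, mem_filter.mpr ⟨mem_univ _, hw⟩⟩
    rw [card_univ, Fintype.card_fun] at hle
    exact_mod_cast hle
  have hlt : (Fintype.card W : ℝ) * Real.exp (-(d * Fintype.card κ)) < 1 := by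
    rw [Real.exp_neg, ← div_eq_mul_inv, div_lt_one (Real.exp_pos _), ← Real.log_lt_iff_lt_exp hW]
    exact hκ
  have hmiss : ∀ w, (#{f : κ → C | ∀ a, ¬ R (f a) w} : ℝ) ≤
      Real.exp (-(d * Fintype.card κ)) * Fintype.card C ^ Fintype.card κ := fun w =>
    card_filter_forall_not_le (R := fun c => R c w) (hd w)
  have htotal := hunion.trans (sum_le_sum fun w _ => hmiss w)
  rw [sum_const, card_univ, nsmul_eq_mul, ← mul_assoc] at htotal
  exact absurd htotal (not_le.mpr (mul_lt_of_lt_one_left (pow_pos hC _) hlt))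

variable {I γ 𝒱 ι : Type*} [Fintype I] [Fintype γ] [Fintype 𝒱] [AddCommGroup 𝒱] [Fintype ι]
  [DecidableEq ι]

/-- A code describing each sequence `w` by a book and by an index in each `K i`, in such a way that
the codewords `word (book w) i (index w i)` have with a translate of `w` the joint type of
`(x, v)`. The translation, which depends on the book only, allows `w` to be arbitrary although only
the rearrangements of `v` can be jointly typical with codewords. -/
structure TypicalCode (K : ι → Type*) (κ : Type*) (x : ι → I → γ) (v : I → 𝒱) where
  word : κ → ∀ i, K i → I → γ
  shift : κ → I → 𝒱
  book : (I → 𝒱) → κ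
  index : (I → 𝒱) → ∀ i, K i
  typical : ∀ w, (fun j => ((fun i => word (book w) i (index w i) j), (w + shift (book w)) j)) ∈
    typeClass fun j => ((fun i => x i j), v j)

variable {K : ι → Type*} {κ : Type*} {x : ι → I → γ} {v : I → 𝒱}

/-- The book and the bins of the indices in `B` determine the indices in `B`. -/
def TypicalCode.Decodes (c : TypicalCode K κ x v) (B : Finset ι) (bin : ∀ i, K i → ℕ) : Prop :=
  ∀ w w', c.book w = c.book w' → (∀ i ∈ B, bin i (c.index w i) = bin i (c.index w' i)) →
    ∀ i ∈ B, c.index w i = c.index w' i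

theorem TypicalCode.Decodes.map_eq {c : TypicalCode K κ x v} {B : Finset ι}
    {bin : ∀ i, K i → ℕ} (h : c.Decodes B bin) {𝒲 : Type*} [AddCommGroup 𝒲] {π : 𝒱 →+ 𝒲}
    (hπ : ∀ j j', (∀ i ∈ B, x i j = x i j') → π (v j) = π (v j')) {w w' : I → 𝒱}
    (hbook : c.book w = c.book w')
    (hbin : ∀ i ∈ B, bin i (c.index w i) = bin i (c.index w' i)) (j : I) :
    π (w j) = π (w' j) := by
  obtain ⟨σ, hσ⟩ := mem_typeClass.mp (c.typical w)
  obtain ⟨σ', hσ'⟩ := mem_typeClass.mp (c.typical w')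
  obtain ⟨hword, hshift⟩ := Prod.ext_iff.mp (congrFun hσ j)
  obtain ⟨hword', hshift'⟩ := Prod.ext_iff.mp (congrFun hσ' j)
  have hagree : ∀ i ∈ B, x i (σ j) = x i (σ' j) := fun i hi => by
    refine (congrFun hword i).symm.trans (Eq.trans ?_ (congrFun hword' i))
    simp only [hbook, h w w' hbook hbin i hi]
  have hsum := hπ _ _ hagree
  simp only [Function.comp_apply, Pi.add_apply] at hshift hshift'
  rwa [← hshift, ← hshift', hbook, map_add, map_add, add_left_inj] at hsum

variable [∀ i, Fintype (K i)] [Fintype κ] {Δ : Type*} [Fintype Δ] {B : Δ → Finset ι}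
  {r : Δ → ι → ℝ} {k : ℝ}

lemma IsCodable.card_typeClass_mul_card_codebook_le (h : IsCodable K x v B r k) (hk : 0 ≤ k)
    (hr : ∀ d i, 0 ≤ r d i) (hK : ∀ i, Nonempty (K i)) (bin : Δ → ∀ i, K i → ℕ)
    (hbin : ∀ d i m, (#{z | bin d i z = bin d i m ∧ z ≠ m} : ℝ) ≤ r d i) (w : I → 𝒱) :
    (#(typeClass v) : ℝ) * Fintype.card (Codebook K fun i => ↥(typeClass (x i))) ≤
      4 * 2 ^ Fintype.card ι * k *
        #{a : Codebook K (fun i => ↥(typeClass (x i))) × (I → 𝒱) | w + a.2 ∈ typeClass v ∧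
          ∃ m, IsDecodable (jointlyTypical x v (w + a.2))
            (fun d => typicalDecoder x (B d) (bin d)) a.1 m} := by
  set good : (I → 𝒱) → Finset (Codebook K fun i => ↥(typeClass (x i))) := fun w' =>
    {c | ∃ m, IsDecodable (jointlyTypical x v w') (fun d => typicalDecoder x (B d) (bin d)) c m}
  have hbij : ∑ w' ∈ typeClass v, #(good w') =
      #{a : Codebook K (fun i => ↥(typeClass (x i))) × (I → 𝒱) | w + a.2 ∈ typeClass v ∧
          ∃ m, IsDecodable (jointlyTypical x v (w + a.2))
            (fun d => typicalDecoder x (B d) (bin d)) a.1 m} := by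
    rw [← card_sigma]
    refine card_bij' (fun a _ => (a.2, a.1 - w)) (fun a _ => ⟨w + a.2, a.1⟩) ?_ ?_ ?_ ?_
    · intro a ha
      simpa [good] using ha
    · intro a ha
      simpa [good] using ha
    · exact fun a _ => by simp
    · exact fun a _ => by simp
  rw [← hbij, Nat.cast_sum, mul_sum, ← nsmul_eq_mul, ← sum_const]
  exact sum_le_sum fun w' hw' => h.card_codebook_le hk hr hK bin hbin hw'

theorem IsCodable.exists_typicalCode (h : IsCodable K x v B r k) (hk : 0 < k)
    (hr : ∀ d i, 0 ≤ r d i) (hK : ∀ i, Nonempty (K i)) (bin : Δ → ∀ i, K i → ℕ)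
    (hbin : ∀ d i m, (#{z | bin d i z = bin d i m ∧ z ≠ m} : ℝ) ≤ r d i)
    (hκ : Real.log (Fintype.card (I → 𝒱)) * (4 * 2 ^ Fintype.card ι * k *
      Fintype.card (I → 𝒱)) < #(typeClass v) * Fintype.card κ) :
    ∃ c : TypicalCode K κ x v, ∀ d, c.Decodes (B d) (bin d) := by
  have hne : Nonempty (Codebook K fun i => ↥(typeClass (x i))) :=
    ⟨fun a => ⟨x a.1, self_mem_typeClass _⟩⟩
  have hden : (0 : ℝ) < 4 * 2 ^ Fintype.card ι * k * Fintype.card (I → 𝒱) :=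
    mul_pos (by positivity) (Nat.cast_pos.mpr Fintype.card_pos)
  obtain ⟨f, hf⟩ := exists_cover (κ := κ)
    (C := Codebook K (fun i => ↥(typeClass (x i))) × (I → 𝒱))
    (R := fun a w => w + a.2 ∈ typeClass v ∧ ∃ m, IsDecodable (jointlyTypical x v (w + a.2))
      (fun d => typicalDecoder x (B d) (bin d)) a.1 m)
    (d := #(typeClass v) / (4 * 2 ^ Fintype.card ι * k * Fintype.card (I → 𝒱)))
    (fun w => by
      rw [div_mul_eq_mul_div, div_le_iff₀' hden, Fintype.card_prod, Nat.cast_mul, ← mul_assoc,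
        mul_right_comm _ (Fintype.card (I → 𝒱) : ℝ)]
      refine mul_le_mul_of_nonneg_right ((h.card_typeClass_mul_card_codebook_le hk.le hr hK bin hbin
        w).trans_eq ?_) (Nat.cast_nonneg _)
      congr!)
    (by rwa [div_mul_eq_mul_div, lt_div_iff₀ hden])
  choose book _ index hindex using hf
  refine ⟨⟨fun a i m => ((f a).1 ⟨i, m⟩).1, fun a => (f a).2, book, index,
    fun w => mem_jointlyTypical.mp (hindex w).1⟩, fun d w w' hbook hb i hi => ?_⟩
  refine ((hindex w).2 d (index w') (fun i hi => (hb i hi).symm) ?_ i hi).symm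
  have htyp := (hindex w').1
  rw [← show book w = book w' from hbook] at htyp
  exact comp_mem_typeClass (fun (a : (ι → γ) × 𝒱) (i : B d) => a.1 i)
    (mem_jointlyTypical.mp htyp)

end Covering

section TypeClassAsymptotics

open Finset Filter Topology

lemma log_factorial_sub_mem_Icc (m : ℕ) :
    Real.log m.factorial - m * Real.log m + m ∈ Set.Icc 0 √m := by
  rcases Nat.eq_zero_or_pos m with rfl | hm
  · simp
  have hm1 : (1 : ℝ) ≤ m := by exact_mod_cast hm
  have hlog : 0 ≤ Real.log m := Real.log_nonneg hm1
  constructor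
  · have hpi : 0 ≤ Real.log (2 * Real.pi) := Real.log_nonneg (by linarith [Real.two_le_pi])
    linarith [Stirling.le_log_factorial_stirling hm.ne']
  · obtain ⟨l, rfl⟩ := Nat.exists_eq_succ_of_ne_zero hm.ne'
    have hanti := Stirling.log_stirlingSeq'_antitone (Nat.zero_le l)
    simp only [Function.comp_apply, Stirling.log_stirlingSeq_formula] at hanti
    rw [Real.log_mul two_ne_zero (by positivity), Real.log_div (by positivity) (Real.exp_ne_zero 1),
      Real.log_exp] at hanti
    have hsqrt := Real.log_le_sub_one_of_pos (x := √((l.succ : ℕ) : ℝ)) (by positivity)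
    rw [Real.log_sqrt (by positivity)] at hsqrt
    norm_num at hanti hsqrt ⊢
    linarith

lemma tendsto_log_factorial_div {c : ℕ → ℕ} {y : ℝ}
    (h : Tendsto (fun n : ℕ => (c n : ℝ) / n) atTop (𝓝 y)) :
    Tendsto (fun n : ℕ => (Real.log (c n).factorial - c n * Real.log n + c n) / n) atTop
      (𝓝 (y * Real.log y)) := by
  have hstirling : Tendsto (fun n : ℕ =>
      (Real.log (c n).factorial - c n * Real.log (c n) + c n) / n) atTop (𝓝 0) := by
    have hsqrt : Tendsto (fun n : ℕ => √((c n : ℝ) / n) * √(1 / n)) atTop (𝓝 0) := by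
      simpa using h.sqrt.mul (tendsto_one_div_atTop_nhds_zero_nat (𝕜 := ℝ)).sqrt
    refine squeeze_zero (fun n => div_nonneg (log_factorial_sub_mem_Icc _).1 n.cast_nonneg)
      (fun n => ?_) hsqrt
    rw [← Real.sqrt_mul (by positivity), div_mul_div_comm, mul_one,
      Real.sqrt_div (Nat.cast_nonneg _), Real.sqrt_mul_self n.cast_nonneg]
    exact div_le_div_of_nonneg_right (log_factorial_sub_mem_Icc _).2 n.cast_nonneg
  have hlim := hstirling.add ((Real.continuous_mul_log.tendsto y).comp h)
  rw [zero_add] at hlim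
  refine hlim.congr' ?_
  filter_upwards [eventually_ne_atTop 0] with n hn
  have hn' : (n : ℝ) ≠ 0 := Nat.cast_ne_zero.mpr hn
  rcases eq_or_ne (c n) 0 with hc | hc
  · simp [hc]
  · simp only [Function.comp_apply]
    rw [Real.log_div (Nat.cast_ne_zero.mpr hc) hn']
    field_simp
    ring

lemma log_card_typeClass {I A : Type*} [Fintype I] [Fintype A] [DecidableEq A] (x : I → A) :
    Real.log #(typeClass x) = Real.log (Fintype.card I).factorial -
      ∑ a, Real.log (#{j | x j = a}).factorial := by
  have hfac : ∀ m : ℕ, (m.factorial : ℝ) ≠ 0 := fun m => Nat.cast_ne_zero.mpr m.factorial_ne_zero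
  rw [← card_typeClass_mul_prod_factorial x, Nat.cast_mul, Nat.cast_prod,
    Real.log_mul (Nat.cast_ne_zero.mpr (card_typeClass_pos x).ne')
      (prod_ne_zero_iff.mpr fun a _ => hfac _), Real.log_prod fun a _ => hfac _,
    add_sub_cancel_right]

variable {Ω : Type} {p : Ω → ℝ}

/-- The number of occurrences of the letter `ω` in the base sequence of nominal length `n`. -/
noncomputable def letterCount (p : Ω → ℝ) (n : ℕ) (ω : Ω) : ℕ := ⌈p ω * n⌉₊

/-- The positions of the base sequence of nominal length `n`; as letter counts are rounded up, there
can be more than `n` of them. -/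
abbrev Position (p : Ω → ℝ) (n : ℕ) : Type := Σ ω : Ω, Fin (letterCount p n ω)

/-- A sequence of empirical distribution close to `p`. -/
def baseSeq (p : Ω → ℝ) (n : ℕ) : Position p n → Ω := Sigma.fst

lemma tendsto_letterCount_div (hp : ∀ ω, 0 ≤ p ω) (ω : Ω) :
    Tendsto (fun n : ℕ => (letterCount p n ω : ℝ) / n) atTop (𝓝 (p ω)) :=
  (tendsto_nat_ceil_mul_div_atTop (hp ω)).comp tendsto_natCast_atTop_atTop

variable [Fintype Ω]

lemma card_position (n : ℕ) : Fintype.card (Position p n) = ∑ ω, letterCount p n ω := by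
  simp only [Position, Fintype.card_sigma, Fintype.card_fin]

lemma le_card_position (hp : ∑ ω, p ω = 1) (n : ℕ) : n ≤ Fintype.card (Position p n) := by
  have hle : (n : ℝ) ≤ ∑ ω, (letterCount p n ω : ℝ) := by
    rw [← one_mul (n : ℝ), ← hp, sum_mul]
    exact sum_le_sum fun ω _ => Nat.le_ceil _
  rw [card_position]
  exact_mod_cast hle

lemma card_position_le (hp : ∀ ω, 0 ≤ p ω) (hp1 : ∑ ω, p ω = 1) (n : ℕ) :
    Fintype.card (Position p n) ≤ n + Fintype.card Ω := by
  have hle : ∑ ω, (letterCount p n ω : ℝ) ≤ n + Fintype.card Ω := by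
    calc ∑ ω, (letterCount p n ω : ℝ) ≤ ∑ ω, (p ω * n + 1) :=
          sum_le_sum fun ω _ => (Nat.ceil_lt_add_one (mul_nonneg (hp ω) n.cast_nonneg)).le
      _ = n + Fintype.card Ω := by
          rw [sum_add_distrib, ← sum_mul, hp1, one_mul, sum_const, card_univ, nsmul_one]
  rw [card_position]
  exact_mod_cast hle

variable {A : Type} [DecidableEq A]

lemma card_filter_comp_baseSeq (F : Ω → A) (n : ℕ) (a : A) :
    #{j | (F ∘ baseSeq p n) j = a} = ∑ ω, if F ω = a then letterCount p n ω else 0 := by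
  rw [card_filter, Fintype.sum_sigma]
  refine sum_congr rfl fun ω _ => ?_
  split_ifs with h <;> simp [baseSeq, h]

lemma tendsto_card_filter_comp_baseSeq_div (hp : ∀ ω, 0 ≤ p ω) (F : Ω → A) (a : A) :
    Tendsto (fun n : ℕ => (#{j | (F ∘ baseSeq p n) j = a} : ℝ) / n) atTop (𝓝 (prOf p F a)) := by
  have hlim : Tendsto (fun n : ℕ => ∑ ω, if F ω = a then (letterCount p n ω : ℝ) / n else 0) atTop
      (𝓝 (prOf p F a)) := by
    refine tendsto_finsetSum _ fun ω _ => ?_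
    split_ifs
    · exact tendsto_letterCount_div hp ω
    · exact tendsto_const_nhds
  refine hlim.congr fun n => ?_
  rw [card_filter_comp_baseSeq, Nat.cast_sum, sum_div]
  refine sum_congr rfl fun ω _ => ?_
  split_ifs <;> simp

variable [Fintype A]

theorem tendsto_logb_card_typeClass_div (hp : ∀ ω, 0 ≤ p ω) (hp1 : ∑ ω, p ω = 1) (F : Ω → A) :
    Tendsto (fun n : ℕ => Real.logb 2 #(typeClass (F ∘ baseSeq p n)) / n) atTop
      (𝓝 (ent p F)) := by
  have hpos : Tendsto (fun n : ℕ => (Fintype.card (Position p n) : ℝ) / n) atTop (𝓝 1) := by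
    simp only [card_position, Nat.cast_sum, sum_div]
    exact hp1 ▸ tendsto_finsetSum _ fun ω _ => tendsto_letterCount_div hp ω
  have hlim := ((tendsto_log_factorial_div hpos).sub (tendsto_finsetSum univ fun a _ =>
    tendsto_log_factorial_div (tendsto_card_filter_comp_baseSeq_div hp F a))).div_const
      (Real.log 2)
  have hent : (1 * Real.log 1 - ∑ a, prOf p F a * Real.log (prOf p F a)) / Real.log 2 =
      ent p F := by
    simp only [ent, Real.logb, mul_div_assoc', sum_neg_distrib, ← sum_div, Real.log_one, mul_zero,
      zero_sub, neg_div]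
  rw [hent] at hlim
  refine hlim.congr fun n => ?_
  have hcard : (Fintype.card (Position p n) : ℝ) = ∑ a, (#{j | (F ∘ baseSeq p n) j = a} : ℝ) := by
    rw [← card_univ]
    exact_mod_cast card_eq_sum_card_fiberwise (f := F ∘ baseSeq p n) (t := univ) fun _ _ => by simp
  rw [Real.logb, log_card_typeClass, ← sum_div, sum_add_distrib, sum_sub_distrib, ← sum_mul,
    ← hcard]
  ring

theorem eventually_card_typeClass_mem_Icc (hp : ∀ ω, 0 ≤ p ω) (hp1 : ∑ ω, p ω = 1) (F : Ω → A)
    {η : ℝ} (hη : 0 < η) :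
    ∀ᶠ n : ℕ in atTop, (#(typeClass (F ∘ baseSeq p n)) : ℝ) ∈
      Set.Icc ((2 : ℝ) ^ (n * (ent p F - η))) ((2 : ℝ) ^ (n * (ent p F + η))) := by
  filter_upwards [tendsto_logb_card_typeClass_div hp hp1 F |>.eventually
    (Icc_mem_nhds (sub_lt_self _ hη) (lt_add_of_pos_right _ hη)), eventually_gt_atTop 0]
    with n hlim hn
  have hn' : (0 : ℝ) < n := Nat.cast_pos.mpr hn
  have hT : (0 : ℝ) < #(typeClass (F ∘ baseSeq p n)) := Nat.cast_pos.mpr (card_typeClass_pos _)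
  rw [le_div_iff₀' hn', div_le_iff₀' hn'] at hlim
  exact ⟨(Real.le_logb_iff_rpow_le one_lt_two hT).mp hlim.1,
    (Real.logb_le_iff_le_rpow one_lt_two hT).mp hlim.2⟩

end TypeClassAsymptotics

section Rates

open Finset Filter Topology

/-- The integer `⌈2 ^ x⌉`, the size of an alphabet of about `x` bits. -/
noncomputable def ceilExp2 (x : ℝ) : ℕ := ⌈(2 : ℝ) ^ x⌉₊

lemma ceilExp2_pos (x : ℝ) : 0 < ceilExp2 x := Nat.ceil_pos.mpr (Real.rpow_pos_of_pos two_pos x)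

lemma two_rpow_le_ceilExp2 (x : ℝ) : (2 : ℝ) ^ x ≤ ceilExp2 x := Nat.le_ceil _

lemma ceilExp2_lt_two_rpow_add_one (x : ℝ) : (ceilExp2 x : ℝ) < 2 ^ x + 1 :=
  Nat.ceil_lt_add_one (Real.rpow_nonneg zero_le_two x)

lemma ceilExp2_le_two_rpow {x : ℝ} (hx : 0 ≤ x) : (ceilExp2 x : ℝ) ≤ 2 ^ (x + 1) := by
  have hone : (1 : ℝ) ≤ 2 ^ x := Real.one_le_rpow one_le_two hx
  rw [Real.rpow_add_one two_ne_zero]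
  linarith [ceilExp2_lt_two_rpow_add_one x]

lemma card_filter_div_eq_lt {N c : ℕ} (hc : 0 < c) (m : Fin N) :
    #{z : Fin N | (z : ℕ) / c = m / c ∧ z ≠ m} < c := by
  have hmem : (m : ℕ) ∈ Ico (m / c * c) (m / c * c + c) :=
    mem_Ico.mpr ⟨Nat.div_mul_le_self _ _, Nat.lt_div_mul_add hc⟩
  have hle : #{z : Fin N | (z : ℕ) / c = m / c ∧ z ≠ m} ≤
      #((Ico (m / c * c) (m / c * c + c)).erase m) := by
    refine card_le_card_of_injOn Fin.val (fun z hz => ?_) Fin.val_injective.injOn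
    obtain ⟨hdiv, hne⟩ := (mem_filter.mp hz).2
    refine mem_erase.mpr ⟨Fin.val_ne_of_ne hne, mem_Ico.mpr ?_⟩
    rw [← hdiv]
    exact ⟨Nat.div_mul_le_self _ _, Nat.lt_div_mul_add hc⟩
  refine hle.trans_lt ?_
  rw [card_erase_of_mem hmem, Nat.card_Ico]
  omega

/-- The bin of an index from a set of rate `R'` that is split into bins of consecutive indices,
about `2 ^ (n * (ρ + δ))` in number. -/
noncomputable def rateBin (n : ℕ) (δ R' ρ : ℝ) (m : Fin (ceilExp2 (n * R'))) : ℕ :=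
  m / ceilExp2 (n * (R' - ρ - δ))

lemma card_filter_rateBin_eq_le (n : ℕ) (δ R' ρ : ℝ) (m : Fin (ceilExp2 (n * R'))) :
    (#{z | rateBin n δ R' ρ z = rateBin n δ R' ρ m ∧ z ≠ m} : ℝ) ≤ 2 ^ (n * (R' - ρ - δ)) := by
  have hlt : (#{z | rateBin n δ R' ρ z = rateBin n δ R' ρ m ∧ z ≠ m} : ℝ) + 1 ≤
      ceilExp2 (n * (R' - ρ - δ)) := by
    exact_mod_cast card_filter_div_eq_lt (ceilExp2_pos _) m
  linarith [ceilExp2_lt_two_rpow_add_one (n * (R' - ρ - δ))]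

lemma rateBin_lt {n : ℕ} {δ R' ρ : ℝ} (hR' : 0 ≤ R') (m : Fin (ceilExp2 (n * R'))) :
    rateBin n δ R' ρ m < ceilExp2 (n * (ρ + δ) + 1) := by
  refine Nat.div_lt_of_lt_mul (m.2.trans_le (Nat.cast_le (α := ℝ).mp ?_))
  calc (ceilExp2 (n * R') : ℝ) ≤ 2 ^ (n * R' + 1) :=
        ceilExp2_le_two_rpow (mul_nonneg n.cast_nonneg hR')
    _ = 2 ^ (n * (R' - ρ - δ)) * 2 ^ (n * (ρ + δ) + 1) := by
        rw [← Real.rpow_add two_pos]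
        congr 1
        ring
    _ ≤ ((ceilExp2 (n * (R' - ρ - δ)) * ceilExp2 (n * (ρ + δ) + 1) : ℕ) : ℝ) := by
        rw [Nat.cast_mul]
        exact mul_le_mul (two_rpow_le_ceilExp2 _) (two_rpow_le_ceilExp2 _)
          (Real.rpow_nonneg zero_le_two _) (Nat.cast_nonneg _)

lemma eventually_add_mul_lt_two_rpow (a b : ℝ) {δ : ℝ} (hδ : 0 < δ) :
    ∀ᶠ n : ℕ in atTop, a + b * n < (2 : ℝ) ^ (n * δ) := by
  have h2δ : 1 < (2 : ℝ) ^ δ := Real.one_lt_rpow one_lt_two hδ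
  have hlim : Tendsto (fun n : ℕ => a * ((n : ℝ) ^ 0 / ((2 : ℝ) ^ δ) ^ n) +
      b * ((n : ℝ) ^ 1 / ((2 : ℝ) ^ δ) ^ n)) atTop (𝓝 (a * 0 + b * 0)) :=
    ((tendsto_pow_const_div_const_pow_of_one_lt 0 h2δ).const_mul a).add
      ((tendsto_pow_const_div_const_pow_of_one_lt 1 h2δ).const_mul b)
  filter_upwards [hlim.eventually_lt_const (show a * 0 + b * 0 < 1 by norm_num)] with n hn
  rw [mul_comm (n : ℝ) δ, Real.rpow_mul zero_le_two, Real.rpow_natCast]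
  rwa [pow_zero, pow_one, ← mul_div_assoc, ← mul_div_assoc, ← add_div, mul_one,
    div_lt_one (by positivity)] at hn

lemma prod_le_two_rpow_sum {ι : Type*} {s : Finset ι} {f g : ι → ℝ} (hf : ∀ i ∈ s, 0 ≤ f i)
    (h : ∀ i ∈ s, f i ≤ 2 ^ g i) : ∏ i ∈ s, f i ≤ 2 ^ ∑ i ∈ s, g i :=
  (prod_le_prod hf h).trans_eq (Real.rpow_sum_of_pos two_pos g s).symm

lemma two_rpow_sum_le_prod {ι : Type*} {s : Finset ι} {f g : ι → ℝ}
    (h : ∀ i ∈ s, 2 ^ g i ≤ f i) : 2 ^ ∑ i ∈ s, g i ≤ ∏ i ∈ s, f i :=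
  (Real.rpow_sum_of_pos two_pos g s).trans_le
    (prod_le_prod (fun _ _ => Real.rpow_nonneg zero_le_two _) h)

end Rates

section RateConditions

open Finset Filter Topology

variable {Ω γ 𝒱 : Type} [Fintype Ω] [Fintype γ] [DecidableEq γ] [Fintype 𝒱] [DecidableEq 𝒱] {M : ℕ}

/-- The condition on the rates `R'` of the codebooks and the rates `ρ` of their bins under which the
bins on `B` determine the indices on `B`. -/
def PackingCondition (p : Ω → ℝ) (X : Fin M → Ω → γ) (R' ρ : Fin M → ℝ) (B : Finset (Fin M)) :
    Prop :=
  ∀ J ⊆ B, ∑ j ∈ J, (R' j - ρ j) ≤ ∑ j ∈ J, ent p (X j) - cjEnt p X J (B \ J)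

/-- The multiple-description conditions on codebook rates `R'` and, for each decoder `d` seeing the
bins of the descriptions in `B d`, binning rates `ρ d`. Unlike in `RstarMD`, every decoder has its
own binning. -/
structure RateConditions {Δ : Type*} (p : Ω → ℝ) (V : Ω → 𝒱) (X : Fin M → Ω → γ)
    (B : Δ → Finset (Fin M)) (ρ : Δ → Fin M → ℝ) (R' : Fin M → ℝ) : Prop where
  covering : ∀ E : Finset (Fin M), ∑ i ∈ E, ent p (X i) - jEntCondS p X E V ≤ ∑ i ∈ E, R' i
  packing : ∀ d, PackingCondition p X R' (ρ d) (B d)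

variable {p : Ω → ℝ} {V : Ω → 𝒱} {X : Fin M → Ω → γ} {Δ : Type*} {B : Δ → Finset (Fin M)}
  {ρ : Δ → Fin M → ℝ} {R' : Fin M → ℝ} {δ η : ℝ}

lemma RateConditions.covering_exponent_le (h : RateConditions p V X B ρ R') (hη : 0 < η)
    (hδ : δ = (M + 4) * η) (E : Finset (Fin M)) {n : ℝ} (hn : 0 ≤ n) :
    n * (ent p V + η) + ∑ i ∈ E, n * (ent p (X i) + η) ≤
      n * δ + n * (ent p (fun ω => ((fun i : E => X i ω), V ω)) - η) + ∑ i ∈ E, n * R' i := by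
  have hcov := h.covering E
  have hE : (#E : ℝ) * η ≤ M * η := by
    gcongr
    exact card_le_univ E |>.trans_eq (Fintype.card_fin M)
  rw [jEntCondS] at hcov
  simp only [← mul_sum, ← mul_add, sum_add_distrib, sum_const, nsmul_eq_mul]
  refine mul_le_mul_of_nonneg_left ?_ hn
  linarith

lemma RateConditions.packing_exponent_le (h : RateConditions p V X B ρ R') (hη : 0 < η)
    (hδ : δ = (M + 4) * η) {d : Δ} {J : Finset (Fin M)} (hJ : J ⊆ B d) (hJne : J.Nonempty)
    {n : ℝ} (hn : 0 ≤ n) :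
    n * (jEnt p X (B d) + η) + ∑ j ∈ J, n * (R' j - ρ d j - δ) + n * η ≤
      n * (jEnt p X (B d \ J) - η) + ∑ j ∈ J, n * (ent p (X j) - η) := by
  have hpack := h.packing d J hJ
  have hJ1 : (1 : ℝ) ≤ #J := by exact_mod_cast hJne.card_pos
  rw [cjEnt, union_sdiff_of_subset hJ] at hpack
  simp only [sum_sub_distrib] at hpack
  simp only [← mul_sum, ← mul_add, sum_sub_distrib, sum_const, nsmul_eq_mul]
  refine mul_le_mul_of_nonneg_left ?_ hn
  have hslack : 3 * η ≤ #J * (δ - η) := by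
    have hM : 3 * η ≤ δ - η := by
      rw [hδ]
      nlinarith [(Nat.cast_nonneg M : (0 : ℝ) ≤ M)]
    nlinarith
  linarith

lemma RateConditions.eventually_covering (h : RateConditions p V X B ρ R') (hp : ∀ ω, 0 ≤ p ω)
    (hp1 : ∑ ω, p ω = 1) (hη : 0 < η) (hδ : δ = (M + 4) * η) :
    ∀ᶠ n : ℕ in atTop, ∀ E : Finset (Fin M),
      (#(typeClass (V ∘ baseSeq p n)) : ℝ) * ∏ i ∈ E, (#(typeClass (X i ∘ baseSeq p n)) : ℝ) ≤
        2 ^ (n * δ) *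
          #(typeClass ((fun ω => ((fun i : E => X i ω), V ω)) ∘ baseSeq p n)) *
          ∏ i ∈ E, (ceilExp2 (n * R' i) : ℝ) := by
  filter_upwards [eventually_card_typeClass_mem_Icc hp hp1 V hη,
    eventually_all.mpr fun i => eventually_card_typeClass_mem_Icc hp hp1 (X i) hη,
    eventually_all.mpr fun E : Finset (Fin M) =>
      eventually_card_typeClass_mem_Icc hp hp1 (fun ω => ((fun i : E => X i ω), V ω)) hη]
    with n hV hX hXV E
  calc (#(typeClass (V ∘ baseSeq p n)) : ℝ) * ∏ i ∈ E, (#(typeClass (X i ∘ baseSeq p n)) : ℝ)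
      ≤ 2 ^ (n * (ent p V + η)) * 2 ^ ∑ i ∈ E, n * (ent p (X i) + η) :=
        mul_le_mul hV.2 (prod_le_two_rpow_sum (fun _ _ => Nat.cast_nonneg _) fun i _ => (hX i).2)
          (prod_nonneg fun _ _ => Nat.cast_nonneg _) (Real.rpow_nonneg zero_le_two _)
    _ ≤ 2 ^ (n * δ) * 2 ^ (n * (ent p (fun ω => ((fun i : E => X i ω), V ω)) - η)) *
          2 ^ ∑ i ∈ E, n * R' i := by
        simp only [← Real.rpow_add two_pos]
        exact Real.rpow_le_rpow_of_exponent_le one_le_two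
          (h.covering_exponent_le hη hδ E n.cast_nonneg)
    _ ≤ _ := by
        refine mul_le_mul (mul_le_mul_of_nonneg_left (hXV E).1 (Real.rpow_nonneg zero_le_two _))
          (two_rpow_sum_le_prod fun i _ => two_rpow_le_ceilExp2 _)
          (Real.rpow_nonneg zero_le_two _) ?_
        exact mul_nonneg (Real.rpow_nonneg zero_le_two _) (Nat.cast_nonneg _)

lemma RateConditions.eventually_packing (h : RateConditions p V X B ρ R') (hp : ∀ ω, 0 ≤ p ω)
    (hp1 : ∑ ω, p ω = 1) (hη : 0 < η) (hδ : δ = (M + 4) * η) (c : ℝ) :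
    ∀ᶠ n : ℕ in atTop, ∀ d, ∀ J ⊆ B d, J.Nonempty →
      (#(typeClass ((fun ω (i : B d) => X i ω) ∘ baseSeq p n)) : ℝ) *
          (∏ j ∈ J, 2 ^ (n * (R' j - ρ d j - δ))) * c ≤
        #(typeClass ((fun ω (i : ↥(B d \ J)) => X i ω) ∘ baseSeq p n)) *
          ∏ j ∈ J, (#(typeClass (X j ∘ baseSeq p n)) : ℝ) := by
  filter_upwards [eventually_all.mpr fun i => eventually_card_typeClass_mem_Icc hp hp1 (X i) hη,
    eventually_all.mpr fun E : Finset (Fin M) =>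
      eventually_card_typeClass_mem_Icc hp hp1 (fun ω (i : E) => X i ω) hη,
    eventually_add_mul_lt_two_rpow c 0 hη] with n hX hXE hc d J hJ hJne
  rw [zero_mul, add_zero] at hc
  calc (#(typeClass ((fun ω (i : B d) => X i ω) ∘ baseSeq p n)) : ℝ) *
          (∏ j ∈ J, 2 ^ (n * (R' j - ρ d j - δ))) * c
      ≤ 2 ^ (n * (jEnt p X (B d) + η)) * 2 ^ (∑ j ∈ J, n * (R' j - ρ d j - δ)) *
          2 ^ (n * η) := by
        rw [← Real.rpow_sum_of_pos two_pos]
        have hexp : ∀ y : ℝ, (0 : ℝ) ≤ 2 ^ y := Real.rpow_nonneg zero_le_two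
        exact (mul_le_mul_of_nonneg_left hc.le (mul_nonneg (Nat.cast_nonneg _) (hexp _))).trans
          (mul_le_mul_of_nonneg_right (mul_le_mul_of_nonneg_right (hXE (B d)).2 (hexp _)) (hexp _))
    _ ≤ 2 ^ (n * (jEnt p X (B d \ J) - η)) * 2 ^ ∑ j ∈ J, n * (ent p (X j) - η) := by
        simp only [← Real.rpow_add two_pos]
        exact Real.rpow_le_rpow_of_exponent_le one_le_two
          (h.packing_exponent_le hη hδ hJ hJne n.cast_nonneg)
    _ ≤ _ := mul_le_mul (hXE (B d \ J)).1 (two_rpow_sum_le_prod fun j _ => (hX j).1)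
        (Real.rpow_nonneg zero_le_two _) (Nat.cast_nonneg _)

theorem RateConditions.eventually_isCodable [Fintype Δ] (h : RateConditions p V X B ρ R')
    (hp : ∀ ω, 0 ≤ p ω) (hp1 : ∑ ω, p ω = 1) (hδ : 0 < δ) :
    ∀ᶠ n : ℕ in atTop, IsCodable (fun i => Fin (ceilExp2 (n * R' i))) (fun i => X i ∘ baseSeq p n)
      (V ∘ baseSeq p n) B (fun d i => 2 ^ (n * (R' i - ρ d i - δ))) (2 ^ (n * δ)) := by
  have hM : (0 : ℝ) < M + 4 := by positivity
  have hη : δ = (M + 4) * (δ / (M + 4)) := (mul_div_cancel₀ δ hM.ne').symm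
  filter_upwards [h.eventually_covering hp hp1 (div_pos hδ hM) hη,
    h.eventually_packing hp hp1 (div_pos hδ hM) hη
      (2 * Fintype.card Δ * 2 ^ Fintype.card (Fin M))] with n hcov hpack
  refine ⟨fun E => ?_, hpack⟩
  simp only [Fintype.card_fin]
  exact hcov E

lemma eventually_card_pow_le_card_typeClass_mul [Nonempty 𝒱] (hp : ∀ ω, 0 ≤ p ω)
    (hp1 : ∑ ω, p ω = 1) (hV : ent p V = Real.logb 2 (Fintype.card 𝒱)) (hδ : 0 < δ) :
    ∀ᶠ n : ℕ in atTop, (Fintype.card 𝒱 : ℝ) ^ n ≤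
      #(typeClass (V ∘ baseSeq p n)) * 2 ^ (n * δ) := by
  filter_upwards [eventually_card_typeClass_mem_Icc hp hp1 V hδ] with n hT
  have hle := hT.1
  rwa [hV, mul_sub, Real.rpow_sub two_pos, mul_comm (n : ℝ) (Real.logb 2 _),
    Real.rpow_mul zero_le_two, Real.rpow_logb two_pos one_lt_two.ne'
      (Nat.cast_pos.mpr Fintype.card_pos),
    Real.rpow_natCast, div_le_iff₀ (Real.rpow_pos_of_pos two_pos _)] at hle

lemma eventually_log_card_lt [DecidableEq Ω] [Nonempty 𝒱] (hp : ∀ ω, 0 ≤ p ω) (hp1 : ∑ ω, p ω = 1)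
    (hV : ent p V = Real.logb 2 (Fintype.card 𝒱)) (hδ : 0 < δ) {c : ℝ} (hc : 0 ≤ c) :
    ∀ᶠ n : ℕ in atTop, Real.log (Fintype.card (Position p n → 𝒱)) * (c * 2 ^ (n * δ) *
      Fintype.card (Position p n → 𝒱)) <
        #(typeClass (V ∘ baseSeq p n)) * ceilExp2 (n * (3 * δ)) := by
  set b := (Fintype.card 𝒱 : ℝ)
  have hb : 1 ≤ b := Nat.one_le_cast.mpr Fintype.card_pos
  have : 0 ≤ Real.log b := Real.log_nonneg hb
  filter_upwards [eventually_card_pow_le_card_typeClass_mul hp hp1 hV hδ,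
    eventually_add_mul_lt_two_rpow (Fintype.card Ω * Real.log b * (c * b ^ Fintype.card Ω))
      (Real.log b * (c * b ^ Fintype.card Ω)) hδ] with n hT hlt
  have hpos := card_position_le hp hp1 n
  have hpos' : (Fintype.card (Position p n) : ℝ) ≤ n + Fintype.card Ω := by exact_mod_cast hpos
  set e : ℝ := 2 ^ (n * δ)
  have : 0 < e := Real.rpow_pos_of_pos two_pos _
  have he3 : e * e * e ≤ ceilExp2 (n * (3 * δ)) := by
    refine le_trans (le_of_eq ?_) (two_rpow_le_ceilExp2 _)
    rw [← Real.rpow_add two_pos, ← Real.rpow_add two_pos]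
    congr 1
    ring
  rw [Fintype.card_fun, Nat.cast_pow, Real.log_pow]
  calc Fintype.card (Position p n) * Real.log b * (c * e * b ^ Fintype.card (Position p n))
      ≤ (n + Fintype.card Ω) * Real.log b * (c * e * b ^ (n + Fintype.card Ω)) := by gcongr
    _ = (Fintype.card Ω * Real.log b * (c * b ^ Fintype.card Ω) +
          Real.log b * (c * b ^ Fintype.card Ω) * n) * (b ^ n * e) := by ring
    _ < e * (b ^ n * e) := by gcongr
    _ ≤ e * (#(typeClass (V ∘ baseSeq p n)) * e * e) := by gcongr
    _ = #(typeClass (V ∘ baseSeq p n)) * (e * e * e) := by ring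
    _ ≤ _ := mul_le_mul_of_nonneg_left he3 (Nat.cast_nonneg _)

lemma ent_of_uniform [Nonempty 𝒱] (hV : ∀ v, prOf p V v = (Fintype.card 𝒱 : ℝ)⁻¹) :
    ent p V = Real.logb 2 (Fintype.card 𝒱) := by
  have hcard : (Fintype.card 𝒱 : ℝ) ≠ 0 := Nat.cast_ne_zero.mpr Fintype.card_ne_zero
  simp only [ent, hV, Real.logb_inv, mul_neg, neg_neg, sum_const, card_univ, nsmul_eq_mul]
  exact mul_inv_cancel_left₀ hcard _

theorem RateConditions.eventually_exists_typicalCode [Finite Δ] [AddCommGroup 𝒱]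
    (h : RateConditions p V X B ρ R') (hp : ∀ ω, 0 ≤ p ω) (hp1 : ∑ ω, p ω = 1)
    (hV : ∀ v, prOf p V v = (Fintype.card 𝒱 : ℝ)⁻¹) (hδ : 0 < δ) :
    ∀ᶠ n : ℕ in atTop, ∃ c : TypicalCode (fun i => Fin (ceilExp2 (n * R' i)))
      (Fin (ceilExp2 (n * (3 * δ)))) (fun i => X i ∘ baseSeq p n) (V ∘ baseSeq p n),
      ∀ d, c.Decodes (B d) fun i => rateBin n δ (R' i) (ρ d i) := by
  classical
  have := Fintype.ofFinite Δ
  filter_upwards [h.eventually_isCodable hp hp1 hδ,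
    eventually_log_card_lt hp hp1 (ent_of_uniform hV) hδ
      (show (0 : ℝ) ≤ 4 * 2 ^ Fintype.card (Fin M) by positivity)]
    with n hcodable hlog
  refine hcodable.exists_typicalCode (Real.rpow_pos_of_pos two_pos _)
    (fun _ _ => Real.rpow_nonneg zero_le_two _) (fun i => ⟨⟨0, ceilExp2_pos _⟩⟩) _
    (fun d i m => by convert card_filter_rateBin_eq_le n δ (R' i) (ρ d i) m) ?_
  rw [Fintype.card_fin (ceilExp2 _)]
  convert hlog

end RateConditions

section QueryScheme

open Finset

lemma exists_bits {W S : Type*} [Fintype W] [DecidableEq S] (f : W → S) {a : ℕ}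
    (ha : #(univ.image f) ≤ 2 ^ a) :
    ∃ e : W → Fin a → ZMod 2, ∀ w w', e w = e w' ↔ f w = f w' := by
  obtain ⟨g⟩ : Nonempty (↥(univ.image f) ↪ (Fin a → ZMod 2)) := by
    refine Function.Embedding.nonempty_of_card_le ?_
    rwa [Fintype.card_coe, Fintype.card_fun, ZMod.card, Fintype.card_fin]
  exact ⟨fun w => g ⟨f w, mem_image_of_mem f (mem_univ w)⟩, fun w w' =>
    g.injective.eq_iff.trans Subtype.mk_eq_mk⟩

/-- The code in which the queries have the distribution `stdP`; privacy holds since the query to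
each database is uniform for both messages. -/
noncomputable def stdCode {L : ℕ} (a : Fin 2 → ℕ) (b : Fin 2 → Fin 2 → ℕ)
    (phi : ∀ n, Msg L × Msg L → Fin (a n) → ZMod 2)
    (ans : ∀ n q, (Fin (a n) → ZMod 2) → Fin (b n q) → ZMod 2)
    (dec : ∀ (_ : Fin 2) (q₁ q₂ : Fin 2), (Fin (b 0 q₁) → ZMod 2) → (Fin (b 1 q₂) → ZMod 2) →
      Msg L) : Code L where
  Q := Fin 2
  base :=
    { P := stdP
      P_nonneg := fun k qq => by unfold stdP; positivity
      P_sum := fun k => by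
        rw [Fintype.sum_prod_type]
        fin_cases k <;> norm_num [stdP, Fin.sum_univ_two]
      stor := a
      phi := phi
      blen := b
      ans := ans
      dec := dec
      privacy := fun n q s => by
        congr 1
        simp only [Fintype.sum_prod_type]
        fin_cases n <;> fin_cases q <;> simp [stdP, Fin.sum_univ_two] }

lemma sum_betaRate_stdCode {L : ℕ} {a : Fin 2 → ℕ} {b : Fin 2 → Fin 2 → ℕ}
    (phi : ∀ n, Msg L × Msg L → Fin (a n) → ZMod 2)
    (ans : ∀ n q, (Fin (a n) → ZMod 2) → Fin (b n q) → ZMod 2)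
    (dec : ∀ (_ : Fin 2) (q₁ q₂ : Fin 2), (Fin (b 0 q₁) → ZMod 2) → (Fin (b 1 q₂) → ZMod 2) →
      Msg L) :
    ∑ n, betaRate (stdCode a b phi ans dec).base n = (∑ n, ∑ q, (b n q : ℝ)) / 2 := by
  have hbeta : ∀ n, betaRate (stdCode a b phi ans dec).base n =
      ∑ qq : Fin 2 × Fin 2, stdP 0 qq * (b n (if n = 0 then qq.1 else qq.2) : ℝ) := fun _ => rfl
  simp only [hbeta, Fintype.sum_prod_type]
  simp [stdP, Fin.sum_univ_two]
  ring

theorem exists_isZeroError_code {L : ℕ} {S : Fin 2 → Type*} {A : Fin 2 → Fin 2 → Type*}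
    [∀ n, DecidableEq (S n)] [∀ n q, DecidableEq (A n q)]
    {st : ∀ n, Msg L × Msg L → S n} {an : ∀ n q, Msg L × Msg L → A n q}
    (hans : ∀ n q w w', st n w = st n w' → an n q w = an n q w')
    (hdec : ∀ k q₁ q₂, stdP k (q₁, q₂) ≠ 0 → ∀ w w', an 0 q₁ w = an 0 q₁ w' →
      an 1 q₂ w = an 1 q₂ w' → target k w = target k w')
    {a : Fin 2 → ℕ} {b : Fin 2 → Fin 2 → ℕ} (ha : ∀ n, #(univ.image (st n)) ≤ 2 ^ a n)
    (hb : ∀ n q, #(univ.image (an n q)) ≤ 2 ^ b n q) :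
    ∃ C : Code L, IsZeroError C.base ∧ C.base.stor = a ∧
      ∑ n, betaRate C.base n = (∑ n, ∑ q, (b n q : ℝ)) / 2 := by
  choose phi hphi using fun n => exists_bits (st n) (ha n)
  choose bits hbits using fun n q => exists_bits (an n q) (hb n q)
  have hfac : ∀ n q, ∃ r, bits n q = r ∘ phi n := fun n q =>
    (Function.factorsThrough_iff _).mp fun w w' h =>
      (hbits n q w w').mpr (hans n q w w' ((hphi n w w').mp h))
  have hfac' : ∀ k q₁ q₂, ∃ r, stdP k (q₁, q₂) ≠ 0 →
      target k = r ∘ fun w => (bits 0 q₁ w, bits 1 q₂ w) := by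
    intro k q₁ q₂
    by_cases hP : stdP k (q₁, q₂) ≠ 0
    · refine ((Function.factorsThrough_iff _).mp fun w w' h => ?_).imp fun r hr _ => hr
      obtain ⟨h₀, h₁⟩ := Prod.ext_iff.mp h
      exact hdec k q₁ q₂ hP w w' ((hbits 0 q₁ w w').mp h₀) ((hbits 1 q₂ w w').mp h₁)
    · exact ⟨fun _ => 0, fun h => absurd h hP⟩
  choose ans hans' using hfac
  choose dec hdec' using hfac'
  refine ⟨stdCode a b phi ans fun k q₁ q₂ x y => dec k q₁ q₂ (x, y), fun k w qq hP => ?_, rfl,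
    sum_betaRate_stdCode _ _ _⟩
  have h₀ := congrFun (hans' 0 qq.1) w
  have h₁ := congrFun (hans' 1 qq.2) w
  have hw := congrFun (hdec' k qq.1 qq.2 hP) w
  simp only [Function.comp_apply, h₀, h₁] at hw
  exact hw.symm

/-- The descriptions stored at each database: `X0, X1, X2` at the first and `Y1, Y2` at the
second. -/
def stored : Fin 2 → Finset (Fin 5) := ![{0, 1, 2}, {3, 4}]

/-- The descriptions whose bins database `n` sends on query `q`. -/
def requested : Fin 2 → Fin 2 → Finset (Fin 5) := ![![{0, 1}, {0, 2}], ![{3}, {4}]]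

lemma sum_stored (α : Fin 5 → ℝ) :
    ∑ n, ∑ i ∈ stored n, α i = α 0 + α 1 + α 2 + α 3 + α 4 := by
  simp [stored, add_assoc]

lemma sum_requested (β : Fin 5 → ℝ) :
    ∑ n, ∑ q, ∑ i ∈ requested n q, β i = 2 * β 0 + β 1 + β 2 + β 3 + β 4 := by
  simp only [requested, Fin.sum_univ_two, Matrix.cons_val_zero, Matrix.cons_val_one, zero_ne_one,
    Finset.mem_singleton, Fin.reduceEq, not_false_eq_true, Finset.sum_insert, Finset.sum_singleton]
  ring

lemma requested_subset_stored : ∀ n q, requested n q ⊆ stored n := by decide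

lemma requested_union_mem_recs5 : ∀ q₁ q₂, requested 0 q₁ ∪ requested 1 q₂ ∈ recs5 := by decide

lemma target_eq_of_forall_mem_requested {t : ℕ} {Ω γ : Type} {V : Ω → Msg t × Msg t}
    {X : Fin 5 → Ω → γ} {T : Set Ω} {f₁₁ f₁₂ f₂₁ f₂₂ : γ × γ × γ → Msg t}
    (hf : ∀ ω ∈ T, (V ω).1 = f₁₁ (X 0 ω, X 1 ω, X 3 ω) ∧ (V ω).1 = f₂₂ (X 0 ω, X 2 ω, X 4 ω) ∧
      (V ω).2 = f₁₂ (X 0 ω, X 1 ω, X 4 ω) ∧ (V ω).2 = f₂₁ (X 0 ω, X 2 ω, X 3 ω))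
    {k q₁ q₂ : Fin 2} (hP : stdP k (q₁, q₂) ≠ 0) {ω ω' : Ω} (hω : ω ∈ T) (hω' : ω' ∈ T)
    (h : ∀ i ∈ requested 0 q₁ ∪ requested 1 q₂, X i ω = X i ω') :
    target k (V ω) = target k (V ω') := by
  obtain ⟨h₁₁, h₂₂, h₁₂, h₂₁⟩ := hf ω hω
  obtain ⟨h₁₁', h₂₂', h₁₂', h₂₁'⟩ := hf ω' hω'
  match k, q₁, q₂, hP with
  | 0, 0, 0, _ =>
    rw [h 0 (by decide), h 1 (by decide), h 3 (by decide)] at h₁₁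
    exact h₁₁.trans h₁₁'.symm
  | 0, 1, 1, _ =>
    rw [h 0 (by decide), h 2 (by decide), h 4 (by decide)] at h₂₂
    exact h₂₂.trans h₂₂'.symm
  | 1, 0, 1, _ =>
    rw [h 0 (by decide), h 1 (by decide), h 4 (by decide)] at h₁₂
    exact h₁₂.trans h₁₂'.symm
  | 1, 1, 0, _ =>
    rw [h 0 (by decide), h 2 (by decide), h 3 (by decide)] at h₂₁
    exact h₂₁.trans h₂₁'.symm
  | 0, 0, 1, hP | 0, 1, 0, hP | 1, 0, 0, hP | 1, 1, 1, hP => simp [stdP] at hP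

/-- `target` as an additive map, to which the linearity of a typical code applies. -/
def targetHom (t : ℕ) (k : Fin 2) : Msg t × Msg t →+ Msg t where
  toFun := target k
  map_zero' := by simp [target]
  map_add' v v' := by unfold target; split_ifs <;> rfl

lemma exists_msg_embedding {I : Type*} [Fintype I] {L t : ℕ} (hL : L ≤ t * Fintype.card I) :
    Nonempty (Msg L ↪ (I → Msg t)) := by
  classical
  refine Function.Embedding.nonempty_of_card_le ?_
  rw [Fintype.card_fun, Fintype.card_fun, Fintype.card_fun, ZMod.card, Fintype.card_fin,
    Fintype.card_fin, ← pow_mul]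
  exact Nat.pow_le_pow_right two_pos hL

section Label

variable {I γ 𝒱 ι κ : Type*} [Fintype I] [Fintype γ] [Fintype 𝒱] [AddCommGroup 𝒱] [Fintype ι]
  [DecidableEq ι] {K : ι → Type*} {x : ι → I → γ} {v : I → 𝒱}

/-- The book of a sequence together with the bins of its indices on `E`. -/
def TypicalCode.label (c : TypicalCode K κ x v) (E : Finset ι) (bin : ∀ i, K i → ℕ) (w : I → 𝒱) :
    κ × (E → ℕ) :=
  (c.book w, fun i => bin i (c.index w i))

variable {c : TypicalCode K κ x v} {E : Finset ι} {bin : ∀ i, K i → ℕ}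

lemma TypicalCode.label_eq_label_iff {w w' : I → 𝒱} : c.label E bin w = c.label E bin w' ↔
    c.book w = c.book w' ∧ ∀ i ∈ E, bin i (c.index w i) = bin i (c.index w' i) := by
  simp [label, funext_iff]

lemma TypicalCode.card_image_label_le [Fintype κ] [DecidableEq κ] {W : Type*} [Fintype W]
    (f : W → I → 𝒱) {N : ι → ℕ} (hN : ∀ i m, bin i m < N i) :
    #(univ.image fun w => c.label E bin (f w)) ≤ Fintype.card κ * ∏ i ∈ E, N i := by
  have hsub : (univ.image fun w => c.label E bin (f w)) ⊆
      univ ×ˢ Fintype.piFinset fun i : E => range (N i) := by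
    refine image_subset_iff.mpr fun w _ => mem_product.mpr ⟨mem_univ _, ?_⟩
    exact Fintype.mem_piFinset.mpr fun i => mem_range.mpr (hN i _)
  refine (card_le_card hsub).trans_eq ?_
  rw [card_product, Fintype.card_piFinset, card_univ]
  simp only [card_range, prod_coe_sort E N]

end Label

theorem TypicalCode.exists_isZeroError_code {I γ κ : Type*} [Fintype I] [Fintype γ] [Fintype κ]
    {t L : ℕ} {K : Fin 5 → Type*} {x : Fin 5 → I → γ} {v : I → Msg t × Msg t}
    (c : TypicalCode K κ x v) (hL : L ≤ t * Fintype.card I)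
    (hv : ∀ k q₁ q₂, stdP k (q₁, q₂) ≠ 0 → ∀ j j',
      (∀ i ∈ requested 0 q₁ ∪ requested 1 q₂, x i j = x i j') → target k (v j) = target k (v j'))
    {sbin abin : ∀ i, K i → ℕ} (hdec : ∀ q₁ q₂, c.Decodes (requested 0 q₁ ∪ requested 1 q₂) abin)
    (hstored : ∀ n, c.Decodes (stored n) sbin ∨ ∀ i ∈ stored n, sbin i = abin i)
    {Ns Na : Fin 5 → ℕ} (hNs : ∀ i m, sbin i m < Ns i) (hNa : ∀ i m, abin i m < Na i)
    {a : Fin 2 → ℕ} {b : Fin 2 → Fin 2 → ℕ}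
    (ha : ∀ n, Fintype.card κ * ∏ i ∈ stored n, Ns i ≤ 2 ^ a n)
    (hb : ∀ n q, Fintype.card κ * ∏ i ∈ requested n q, Na i ≤ 2 ^ b n q) :
    ∃ C : Code L, IsZeroError C.base ∧ C.base.stor = a ∧
      ∑ n, betaRate C.base n = (∑ n, ∑ q, (b n q : ℝ)) / 2 := by
  classical
  obtain ⟨e⟩ := exists_msg_embedding (I := I) (t := t) hL
  set spread : Msg L × Msg L → I → Msg t × Msg t := fun w j => (e w.1 j, e w.2 j)
  have htarget : ∀ k w j, targetHom t k (spread w j) = e (target k w) j := fun k w j => by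
    simp only [targetHom, AddMonoidHom.coe_mk, ZeroHom.coe_mk, target, spread]
    split_ifs <;> rfl
  refine PIR.exists_isZeroError_code (st := fun n w => c.label (stored n) sbin (spread w))
    (an := fun n q w => c.label (requested n q) abin (spread w)) (fun n q w w' h => ?_)
    (fun k q₁ q₂ hP w w' h₀ h₁ => ?_) (fun n => (c.card_image_label_le spread hNs).trans (ha n))
    (fun n q => (c.card_image_label_le spread hNa).trans (hb n q))
  · obtain ⟨hbook, hbin⟩ := c.label_eq_label_iff.mp h
    refine c.label_eq_label_iff.mpr ⟨hbook, fun i hi => ?_⟩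
    have hi' := requested_subset_stored n q hi
    rcases hstored n with hn | hn
    · rw [hn _ _ hbook hbin i hi']
    · rw [← hn i hi']
      exact hbin i hi'
  · obtain ⟨hbook, hbin₀⟩ := c.label_eq_label_iff.mp h₀
    have hbin₁ := (c.label_eq_label_iff.mp h₁).2
    refine e.injective (funext fun j => ?_)
    rw [← htarget, ← htarget]
    exact (hdec q₁ q₂).map_eq (hv k q₁ q₂ hP) hbook
      (fun i hi => (mem_union.mp hi).elim (hbin₀ i) (hbin₁ i)) j

end QueryScheme

section Region

open Finset Filter

/-- The number of bits in a label on `E`: the book, and a bin of rate `ρ i` for each `i ∈ E`. -/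
noncomputable def labelBits {ι : Type*} (n : ℕ) (δ : ℝ) (ρ : ι → ℝ) (E : Finset ι) : ℝ :=
  n * (3 * δ) + 1 + ∑ i ∈ E, (n * (ρ i + δ) + 1 + 1)

lemma mul_prod_ceilExp2_le_two_pow_ceil_labelBits {ι : Type*} (n : ℕ) {δ : ℝ} {ρ : ι → ℝ}
    (E : Finset ι) (hδ : 0 ≤ δ) (hρ : ∀ i, 0 ≤ ρ i) :
    ceilExp2 (n * (3 * δ)) * ∏ i ∈ E, ceilExp2 (n * (ρ i + δ) + 1) ≤ 2 ^ ⌈labelBits n δ ρ E⌉₊ := by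
  have hexp : ∀ i, 0 ≤ (n : ℝ) * (ρ i + δ) + 1 := fun i => by
    have := hρ i
    positivity
  refine Nat.cast_le (α := ℝ).mp ?_
  rw [Nat.cast_mul, Nat.cast_prod, Nat.cast_pow, Nat.cast_ofNat, ← Real.rpow_natCast]
  calc (ceilExp2 (n * (3 * δ)) : ℝ) * ∏ i ∈ E, (ceilExp2 (n * (ρ i + δ) + 1) : ℝ)
      ≤ 2 ^ (n * (3 * δ) + 1) * 2 ^ ∑ i ∈ E, (n * (ρ i + δ) + 1 + 1) :=
        mul_le_mul (ceilExp2_le_two_rpow (by positivity))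
          (prod_le_two_rpow_sum (fun _ _ => Nat.cast_nonneg _) fun i _ =>
            ceilExp2_le_two_rpow (hexp i))
          (prod_nonneg fun _ _ => Nat.cast_nonneg _) (Real.rpow_nonneg zero_le_two _)
    _ = 2 ^ labelBits n δ ρ E := (Real.rpow_add two_pos _ _).symm
    _ ≤ 2 ^ (⌈labelBits n δ ρ E⌉₊ : ℝ) :=
        Real.rpow_le_rpow_of_exponent_le one_le_two (Nat.le_ceil _)

lemma eventually_ceil_labelBits_le {ι : Type*} [Fintype ι] {δ : ℝ} {ρ : ι → ℝ} (hδ : 0 < δ)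
    (hρ : ∀ i, 0 ≤ ρ i) :
    ∀ᶠ n : ℕ in atTop, ∀ E : Finset ι,
      (⌈labelBits n δ ρ E⌉₊ : ℝ) ≤ n * (∑ i ∈ E, ρ i + (Fintype.card ι + 4) * δ) := by
  filter_upwards [(tendsto_natCast_atTop_atTop.atTop_mul_const hδ).eventually_ge_atTop
    (2 * Fintype.card ι + 2 : ℝ)] with n hn E
  have hnonneg : 0 ≤ labelBits n δ ρ E := by
    have hsum : 0 ≤ ∑ i ∈ E, ((n : ℝ) * (ρ i + δ) + 1 + 1) := sum_nonneg fun i _ => by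
      have := hρ i
      positivity
    exact add_nonneg (by positivity) hsum
  have hE : (#E : ℝ) * (n * δ) ≤ Fintype.card ι * (n * δ) :=
    mul_le_mul_of_nonneg_right (Nat.cast_le.mpr (card_le_univ E)) (by positivity)
  have hcard : (#E : ℝ) ≤ Fintype.card ι := Nat.cast_le.mpr (card_le_univ E)
  have hbits : labelBits n δ ρ E =
      n * ∑ i ∈ E, ρ i + 3 * (n * δ) + #E * (n * δ) + 2 * #E + 1 := by
    simp only [labelBits, mul_add, sum_add_distrib, sum_const, nsmul_eq_mul, ← mul_sum]
    ring
  calc (⌈labelBits n δ ρ E⌉₊ : ℝ) ≤ labelBits n δ ρ E + 1 := (Nat.ceil_lt_add_one hnonneg).le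
    _ ≤ n * ∑ i ∈ E, ρ i + Fintype.card ι * (n * δ) + 4 * (n * δ) := by linarith
    _ = _ := by ring

lemma ne_zero_of_position {Ω : Type} {p : Ω → ℝ} {n : ℕ} (j : Position p n) :
    p (baseSeq p n j) ≠ 0 := by
  intro h
  have hpos : 0 < letterCount p n j.1 := j.2.pos
  simp [letterCount, show p j.1 = 0 from h] at hpos

lemma ent_equiv_comp {Ω A A' : Type} [Fintype Ω] [Fintype A] [DecidableEq A] [Fintype A']
    [DecidableEq A'] (p : Ω → ℝ) (F : Ω → A) (e : A ≃ A') : ent p (e ∘ F) = ent p F := by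
  refine (Fintype.sum_equiv e _ _ fun a => ?_).symm
  simp only [prOf, Function.comp_apply, e.apply_eq_iff_eq]

variable {Ω γ τ : Type} [Fintype Ω] [Fintype γ] [DecidableEq γ] [Fintype τ] [DecidableEq τ]
  {p : Ω → ℝ} {V : Ω → τ}

lemma jEnt_comp_embedding {k M : ℕ} (p : Ω → ℝ) (X : Fin M → Ω → γ) (e : Fin k ↪ Fin M)
    (A : Finset (Fin k)) : jEnt p (fun i => X (e i)) A = jEnt p X (A.map e) := by
  have hcomp : (fun ω (i : A) => X (e i) ω) =
      ((A.equivMap e).arrowCongr (Equiv.refl γ)).symm ∘ fun ω (i : ↥(A.map e)) => X i ω := rfl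
  rw [jEnt, hcomp, ent_equiv_comp, jEnt]

lemma RstarMD.packingCondition_map {k M : ℕ} {X : Fin M → Ω → γ} {R R' : Fin M → ℝ}
    (e : Fin k ↪ Fin M) (h : RstarMD p V (fun i => X (e i)) {univ} (R ∘ e) (R' ∘ e)) :
    PackingCondition p X R' R (univ.map e) := by
  intro J hJ
  obtain ⟨J, -, rfl⟩ := subset_map_iff.mp hJ
  have hpack := h.2.2 univ (mem_singleton_self _) J (subset_univ _)
  rw [cjEnt, jEnt_comp_embedding, jEnt_comp_embedding, map_union, Finset.map_sdiff] at hpack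
  rwa [sum_map, sum_map, cjEnt]

lemma RstarMD.packingCondition_stored_zero {X : Fin 5 → Ω → γ} {R R' : Fin 5 → ℝ}
    (h : RstarMD p V ![X 0, X 1, X 2] {univ} ![R 0, R 1, R 2] ![R' 0, R' 1, R' 2]) :
    PackingCondition p X R' R (stored 0) := by
  have hmap : stored 0 = univ.map ⟨![0, 1, 2], by decide⟩ := by decide
  rw [hmap]
  refine RstarMD.packingCondition_map (V := V) _ ?_
  convert h using 1 <;> (funext i; fin_cases i <;> rfl)

lemma RstarMD.packingCondition_stored_one {X : Fin 5 → Ω → γ} {R R' : Fin 5 → ℝ}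
    (h : RstarMD p V ![X 3, X 4] {univ} ![R 3, R 4] ![R' 3, R' 4]) :
    PackingCondition p X R' R (stored 1) := by
  have hmap : stored 1 = univ.map ⟨![3, 4], by decide⟩ := by decide
  rw [hmap]
  refine RstarMD.packingCondition_map (V := V) _ ?_
  convert h using 1 <;> (funext i; fin_cases i <;> rfl)

lemma RstarMD.rateConditions {X : Fin 5 → Ω → γ} {α β R' : Fin 5 → ℝ}
    (h : RstarMD p V X recs5 β R') :
    RateConditions (Δ := (Fin 2 × Fin 2) ⊕ {n // PackingCondition p X R' α (stored n)}) p V X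
      (Sum.elim (fun q => requested 0 q.1 ∪ requested 1 q.2) fun n => stored n)
      (Sum.elim (fun _ => β) fun _ => α) R' where
  covering := h.2.1
  packing := Sum.rec (fun q => h.2.2 _ (requested_union_mem_recs5 q.1 q.2)) fun n => n.2

lemma RVSetup.prOf_eq_inv_card {t : ℕ} (S : RVSetup t) (v : Msg t × Msg t) :
    prOf S.p S.V v = (Fintype.card (Msg t × Msg t) : ℝ)⁻¹ := by
  rw [S.V_unif v]
  simp [two_mul, pow_add]

theorem RVSetup.eventually_exists_code {t : ℕ} (S : RVSetup t)
    {f₁₁ f₁₂ f₂₁ f₂₂ : S.γ × S.γ × S.γ → Msg t}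
    (hf : ∀ ω, S.p ω ≠ 0 →
      (S.V ω).1 = f₁₁ (S.X 0 ω, S.X 1 ω, S.X 3 ω) ∧ (S.V ω).1 = f₂₂ (S.X 0 ω, S.X 2 ω, S.X 4 ω) ∧
      (S.V ω).2 = f₁₂ (S.X 0 ω, S.X 1 ω, S.X 4 ω) ∧ (S.V ω).2 = f₂₁ (S.X 0 ω, S.X 2 ω, S.X 3 ω))
    {α β R' : Fin 5 → ℝ} (hR : RstarMD S.p S.V S.X recs5 β R') (hα : ∀ i, 0 ≤ α i)
    (hstored : ∀ n, PackingCondition S.p S.X R' α (stored n) ∨ ∀ i ∈ stored n, α i = β i)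
    {δ : ℝ} (hδ : 0 < δ) :
    ∀ᶠ n : ℕ in atTop, ∀ L ≤ t * n, ∃ C : Code L, IsZeroError C.base ∧
      ∑ m, (C.base.stor m : ℝ) ≤ n * (∑ m, ∑ i ∈ stored m, α i + δ) ∧
      ∑ m, betaRate C.base m ≤ n * ((∑ m, ∑ q, ∑ i ∈ requested m q, β i) / 2 + δ) := by
  classical
  have hβ : ∀ i, 0 ≤ β i := fun i => (hR.1 i).1
  have hR' : ∀ i, 0 ≤ R' i := fun i => (hβ i).trans (hR.1 i).2
  have hη : 0 < δ / 18 := by positivity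
  filter_upwards [(hR.rateConditions (α := α)).eventually_exists_typicalCode S.p_nonneg S.p_sum
      S.prOf_eq_inv_card hη,
    eventually_ceil_labelBits_le hη hα, eventually_ceil_labelBits_le hη hβ]
    with n ⟨c, hc⟩ hbitsα hbitsβ L hL
  obtain ⟨C, hC, hstor, hbeta⟩ := c.exists_isZeroError_code
    (sbin := fun i => rateBin n (δ / 18) (R' i) (α i))
    (abin := fun i => rateBin n (δ / 18) (R' i) (β i))
    (hL.trans (Nat.mul_le_mul_left t (le_card_position S.p_sum n)))
    (fun k q₁ q₂ hP j j' => target_eq_of_forall_mem_requested (T := {ω | S.p ω ≠ 0}) hf hP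
      (ne_zero_of_position j) (ne_zero_of_position j'))
    (fun q₁ q₂ => hc (Sum.inl (q₁, q₂)))
    (fun m => (hstored m).imp (fun hm => hc (Sum.inr ⟨m, hm⟩)) fun hm i hi => by rw [hm i hi])
    (fun i => rateBin_lt (hR' i)) (fun i => rateBin_lt (hR' i))
    (fun m => by
      rw [Fintype.card_fin]
      exact mul_prod_ceilExp2_le_two_pow_ceil_labelBits n (stored m) hη.le hα)
    (fun m q => by
      rw [Fintype.card_fin]
      exact mul_prod_ceilExp2_le_two_pow_ceil_labelBits n (requested m q) hη.le hβ)
  refine ⟨C, hC, ?_, ?_⟩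
  · rw [hstor]
    refine (sum_le_sum fun m _ => hbitsα (stored m)).trans_eq ?_
    simp only [Fin.sum_univ_two, Fintype.card_fin]
    push_cast
    ring
  · rw [hbeta]
    have hsum := sum_le_sum fun m (_ : m ∈ univ) => sum_le_sum fun q (_ : q ∈ univ) =>
      hbitsβ (requested m q)
    refine (div_le_div_of_nonneg_right hsum zero_le_two).trans_eq ?_
    simp only [Fin.sum_univ_two, Fintype.card_fin]
    push_cast
    ring

lemma mul_add_le_of_le_mul_of_mul_le {t n L a ε : ℝ} (hL : L ≤ t * n) (hn : t * n ≤ L + t)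
    (hnL : n ≤ L + 1) (hε : 0 ≤ ε) (hlarge : ε + 2 * t * |a| ≤ L * ε) :
    n * (2 * t * a + ε) ≤ 2 * (L * (a + ε)) := by
  have ha : (t * n - L) * a ≤ t * |a| :=
    (mul_le_mul_of_nonneg_left (le_abs_self a) (sub_nonneg.mpr hL)).trans
      (mul_le_mul_of_nonneg_right (by linarith) (abs_nonneg a))
  have hnε := mul_le_mul_of_nonneg_right hnL hε
  linarith

theorem achievable_of_eventually {t : ℕ} {ab : ℝ × ℝ} (ht : 1 ≤ t)
    (h : ∀ δ > 0, ∀ᶠ n : ℕ in atTop, ∀ L ≤ t * n, ∃ C : Code L, IsZeroError C.base ∧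
      ∑ m, (C.base.stor m : ℝ) ≤ n * (2 * t * ab.1 + δ) ∧
      ∑ m, betaRate C.base m ≤ n * (2 * t * ab.2 + δ)) : Achievable ab := by
  intro ε hε
  have hblocks : Tendsto (fun L => L / t + 1) atTop atTop :=
    (tendsto_add_atTop_nat 1).comp (Nat.tendsto_div_const_atTop (by omega))
  have hlarge : ∀ a : ℝ, ∀ᶠ L : ℕ in atTop, ε + 2 * t * |a| ≤ L * ε := fun a =>
    (tendsto_natCast_atTop_atTop.atTop_mul_const hε).eventually_ge_atTop _
  refine eventually_atTop.mp ?_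
  filter_upwards [hblocks.eventually (h ε hε), hlarge ab.1, hlarge ab.2] with L hcode h₁ h₂
  have hL : L ≤ t * (L / t + 1) := (Nat.lt_mul_div_succ L (by omega)).le
  have hn : t * (L / t + 1) ≤ L + t := by
    rw [mul_add, mul_one]
    exact Nat.add_le_add_right (Nat.mul_div_le L t) t
  have hnL : L / t + 1 ≤ L + 1 := Nat.succ_le_succ (Nat.div_le_self L t)
  obtain ⟨C, hC, hstor, hbeta⟩ := hcode L hL
  have hbound : ∀ a : ℝ, ε + 2 * t * |a| ≤ L * ε →
      ((L / t + 1 : ℕ) : ℝ) * (2 * t * a + ε) ≤ 2 * (L * (a + ε)) := fun a =>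
    mul_add_le_of_le_mul_of_mul_le (by exact_mod_cast hL) (by exact_mod_cast hn)
      (by exact_mod_cast hnL) hε.le
  rw [Fin.sum_univ_two] at hstor hbeta
  refine ⟨C, hC, ?_, ?_⟩
  · rw [div_le_iff₀' two_pos, Nat.cast_add]
    exact hstor.trans (hbound _ h₁)
  · rw [div_le_iff₀' two_pos]
    exact hbeta.trans (hbound _ h₂)

end Region

/-- For every integer `t ≥ 1`, the region `R^{(t)}_in` is contained in the
achievable storage-retrieval rate region `R` of the (2,2) PIR problem. -/
theorem statement2 (t : ℕ) (ht : 1 ≤ t) : {ab : ℝ × ℝ | RinMem t ab} ⊆ Region := by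
  rintro ab ⟨S, ⟨f₁₁, f₁₂, f₂₁, f₂₂, hf⟩, β, R', hR, α, hα, h₀, h₀', h₁, h₁', hA, hB⟩
  have hstored : ∀ n, PackingCondition S.p S.X R' α (stored n) ∨ ∀ i ∈ stored n, α i = β i :=
    Fin.forall_fin_two.mpr
      ⟨(Classical.em _).imp (fun h => (h₀ h).packingCondition_stored_zero)
        fun h => by simpa [stored] using h₀' h,
       (Classical.em _).imp (fun h => (h₁ h).packingCondition_stored_one)
        fun h => by simpa [stored] using h₁' h⟩
  have hstor : ∑ n, ∑ i ∈ stored n, α i ≤ 2 * t * ab.1 := (sum_stored α).trans_le hA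
  have hbeta : (∑ n, ∑ q, ∑ i ∈ requested n q, β i) / 2 ≤ 2 * t * ab.2 := by
    rw [sum_requested]
    linarith
  refine achievable_of_eventually ht fun δ hδ => ?_
  filter_upwards [S.eventually_exists_code hf hR (fun i => (hα i).1) hstored hδ] with n hn L hL
  obtain ⟨C, hC, hCstor, hCbeta⟩ := hn L hL
  exact ⟨C, hC, hCstor.trans (by gcongr), hCbeta.trans (by gcongr)⟩

end PIR
end
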